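/- arXiv:1611.08271 — 2 statements merged into one kernel-verified Lean document; each statement's English description precedes it below -/
import Mathlib

section
/- If G is a P4-sparse graph with at least two vertices, then G is disconnected, or the complement of G is disconnected, or G is a spider (thin or thick) whose head, if nonempty, induces a P4-sparse graph. -/
/-!
Let `G` be `P₄`-sparse with `G` and `Gᶜ` connected. Sparseness is used only in a local form
(`P4Sparse.isLocal`): a vertex outside an induced path `a - b - c - d` sees none of it, all of it,
or exactly the midpoints `b, c`. This condition is invariant under complementation, which also
exchanges thin and thick spiders, so every argument below serves for both `G` and `Gᶜ`.

Remove a vertex `v` and induct on the number of vertices.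

* If `G - v` is disconnected (`thin_of_not_conn`), `v` has neighbours on both sides of a cut and a
  non-neighbour `y` on one of them, `B`, which gives a path `z - v - x - y` with `z` on the other
  side and `x, y ∈ B`. The local condition forces the other side to be `{z}`, and the edges in `B`
  between neighbours and non-neighbours of `v` to be a matching covering all non-neighbours. Hence
  `G` is a thin spider whose legs are `z` and the non-neighbours of `v` in `B`. If `Gᶜ - v` is
  disconnected, the same argument in `Gᶜ` gives a thick spider.
* If `G - v` and `Gᶜ - v` are connected, `G - v` is a spider, without loss of generality thin
  (`Thin.extend`). By the local condition `v` sees the body only, in which case it joins the head;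
  or nothing of body and legs, in which case a neighbour of `v` in the head and `v` itself are a new
  body vertex and its leg (`Thin.extend_null`); or everything, which forces the body to have two
  vertices, so that the spider is also thick and the previous case applies to `Gᶜ`
  (`Thin.extend_full`).

The head is an induced subgraph of `G`, hence `P₄`-sparse.
-/

open SimpleGraph Polynomial

/-- Relation generating the edges of the thin spider `S_t[H,k,j]`: body `C = inl`,
legs `S = inr ∘ inl`, head `R = inr ∘ inr` carrying the head graph `H`. -/
def thinSpiderRel (k j : ℕ) (H : SimpleGraph (Fin j)) :
    (Fin k ⊕ Fin k ⊕ Fin j) → (Fin k ⊕ Fin k ⊕ Fin j) → Prop := fun u v =>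
  (∃ i m : Fin k, u = Sum.inl i ∧ v = Sum.inl m) ∨
  (∃ i : Fin k, u = Sum.inl i ∧ v = Sum.inr (Sum.inl i)) ∨
  (∃ (i : Fin k) (r : Fin j), u = Sum.inl i ∧ v = Sum.inr (Sum.inr r)) ∨
  (∃ r s : Fin j, H.Adj r s ∧ u = Sum.inr (Sum.inr r) ∧ v = Sum.inr (Sum.inr s))

/-- The thin spider `S_t[H,k,j]`: the body `C` is a clique of size `k`, the legs `S`
form an independent set of size `k` with `sᵢ` adjacent to `cₘ` iff `i = m`, every head
vertex is adjacent to every body vertex and to no leg, and the head induces `H`. -/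
def thinSpider (k j : ℕ) (H : SimpleGraph (Fin j)) :
    SimpleGraph (Fin k ⊕ Fin k ⊕ Fin j) :=
  SimpleGraph.fromRel (thinSpiderRel k j H)

instance (k j : ℕ) (H : SimpleGraph (Fin j)) [DecidableRel H.Adj] :
    DecidableRel (thinSpiderRel k j H) := fun u v => by
  unfold thinSpiderRel; infer_instance

instance (k j : ℕ) (H : SimpleGraph (Fin j)) [DecidableRel H.Adj] :
    DecidableRel (thinSpider k j H).Adj := fun u v =>
  inferInstanceAs (Decidable (u ≠ v ∧ (thinSpiderRel k j H u v ∨ thinSpiderRel k j H v u)))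

/-- Relation generating the edges of the thick spider `S_T[H,k,j]`: as in the thin
spider, but `sᵢ` is adjacent to `cₘ` iff `i ≠ m`. -/
def thickSpiderRel (k j : ℕ) (H : SimpleGraph (Fin j)) :
    (Fin k ⊕ Fin k ⊕ Fin j) → (Fin k ⊕ Fin k ⊕ Fin j) → Prop := fun u v =>
  (∃ i m : Fin k, u = Sum.inl i ∧ v = Sum.inl m) ∨
  (∃ i m : Fin k, i ≠ m ∧ u = Sum.inl i ∧ v = Sum.inr (Sum.inl m)) ∨
  (∃ (i : Fin k) (r : Fin j), u = Sum.inl i ∧ v = Sum.inr (Sum.inr r)) ∨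
  (∃ r s : Fin j, H.Adj r s ∧ u = Sum.inr (Sum.inr r) ∧ v = Sum.inr (Sum.inr s))

/-- The thick spider `S_T[H,k,j]`. -/
def thickSpider (k j : ℕ) (H : SimpleGraph (Fin j)) :
    SimpleGraph (Fin k ⊕ Fin k ⊕ Fin j) :=
  SimpleGraph.fromRel (thickSpiderRel k j H)

instance (k j : ℕ) (H : SimpleGraph (Fin j)) [DecidableRel H.Adj] :
    DecidableRel (thickSpiderRel k j H) := fun u v => by
  unfold thickSpiderRel; infer_instance

instance (k j : ℕ) (H : SimpleGraph (Fin j)) [DecidableRel H.Adj] :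
    DecidableRel (thickSpider k j H).Adj := fun u v =>
  inferInstanceAs (Decidable (u ≠ v ∧ (thickSpiderRel k j H u v ∨ thickSpiderRel k j H v u)))

/-- The finite vertex set `W` induces a path `P₄` in `G`. -/
def InducesP4 {V : Type*} (G : SimpleGraph V) (W : Finset V) : Prop :=
  Nonempty (G.induce (W : Set V) ≃g SimpleGraph.pathGraph 4)

/-- A graph is `P₄`-sparse if every set of five vertices contains at most one
4-element subset inducing a path `P₄`. -/
def P4Sparse {V : Type*} (G : SimpleGraph V) : Prop :=
  ∀ s : Finset V, s.card = 5 →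
    {W : Finset V | W ⊆ s ∧ W.card = 4 ∧ InducesP4 G W}.Subsingleton

/-! ### Induced paths on four vertices -/

/-- `a - b - c - d` is an induced path. The six conditions force the vertices to be distinct. -/
def IsP4 {V : Type*} (G : SimpleGraph V) (a b c d : V) : Prop :=
  G.Adj a b ∧ G.Adj b c ∧ G.Adj c d ∧ ¬ G.Adj a c ∧ ¬ G.Adj a d ∧ ¬ G.Adj b d

theorem IsP4.ne {V : Type*} {G : SimpleGraph V} {a b c d : V} (h : IsP4 G a b c d) :
    a ≠ b ∧ a ≠ c ∧ a ≠ d ∧ b ≠ c ∧ b ≠ d ∧ c ≠ d := by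
  obtain ⟨h1, h2, h3, h4, h5, h6⟩ := h
  refine ⟨h1.ne, ?_, ?_, h2.ne, ?_, h3.ne⟩
  · rintro rfl; exact h5 h3
  · rintro rfl; exact h6 h1.symm
  · rintro rfl; exact h5 h1

theorem inducesP4_iff {V : Type*} [DecidableEq V] (G : SimpleGraph V) (W : Finset V) :
    InducesP4 G W ↔ ∃ a b c d, IsP4 G a b c d ∧ W = {a, b, c, d} := by
  constructor
  · rintro ⟨e⟩
    have key : ∀ i j : Fin 4, G.Adj (e.symm i : V) (e.symm j) ↔ (pathGraph 4).Adj i j :=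
      fun i j => e.symm.map_adj_iff
    refine ⟨e.symm 0, e.symm 1, e.symm 2, e.symm 3, ?_, ?_⟩
    · simp only [IsP4, key, pathGraph_adj]
      decide
    · ext x
      simp only [Finset.mem_insert, Finset.mem_singleton]
      constructor
      · intro hx
        obtain ⟨i, hi⟩ := e.symm.surjective ⟨x, hx⟩
        have hi' : x = e.symm i := by rw [hi]
        subst hi'
        fin_cases i <;> simp
      · rintro (h | h | h | h) <;> rw [h] <;> exact (e.symm _).2
  · rintro ⟨a, b, c, d, h, rfl⟩
    obtain ⟨n1, n2, n3, n4, n5, n6⟩ := h.ne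
    obtain ⟨h1, h2, h3, h4, h5, h6⟩ := h
    let g : Fin 4 → V := ![a, b, c, d]
    have hg : ∀ i, g i ∈ (({a, b, c, d} : Finset V) : Set V) := by
      intro i; fin_cases i <;> simp [g]
    let g' : Fin 4 → (({a, b, c, d} : Finset V) : Set V) := fun i => ⟨g i, hg i⟩
    have hb : Function.Bijective g' := by
      constructor
      · intro i j hij
        have hij' : g i = g j := congrArg Subtype.val hij
        fin_cases i <;> fin_cases j <;> simp_all [g]
      · rintro ⟨x, hx⟩
        simp only [Finset.coe_insert, Finset.coe_singleton, Set.mem_insert_iff,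
          Set.mem_singleton_iff] at hx
        rcases hx with rfl | rfl | rfl | rfl
        exacts [⟨0, rfl⟩, ⟨1, rfl⟩, ⟨2, rfl⟩, ⟨3, rfl⟩]
    refine ⟨RelIso.symm ⟨Equiv.ofBijective g' hb, ?_⟩⟩
    intro i j
    change G.Adj (g i) (g j) ↔ _
    rw [pathGraph_adj]
    fin_cases i <;> fin_cases j <;> simp [g, h1, h2, h3, h4, h5, h6, h1.symm, h2.symm, h3.symm,
      G.adj_comm c a, G.adj_comm d a, G.adj_comm d b]

/-- The local form of `P₄`-sparseness: a vertex `x` outside an induced path `a - b - c - d` is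
adjacent to none of its vertices, to all of them, or exactly to the two midpoints `b` and `c`. -/
def Local {V : Type*} (G : SimpleGraph V) : Prop :=
  ∀ a b c d x, IsP4 G a b c d → x ≠ a → x ≠ b → x ≠ c → x ≠ d →
    (¬ G.Adj x a ∧ ¬ G.Adj x b ∧ ¬ G.Adj x c ∧ ¬ G.Adj x d) ∨
    (G.Adj x a ∧ G.Adj x b ∧ G.Adj x c ∧ G.Adj x d) ∨
    (¬ G.Adj x a ∧ G.Adj x b ∧ G.Adj x c ∧ ¬ G.Adj x d)

theorem P4Sparse.isLocal {V : Type*} {G : SimpleGraph V} (hG : P4Sparse G) : Local G := by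
  classical
  intro a b c d x hP ha hb hc hd
  obtain ⟨n1, n2, n3, n4, n5, n6⟩ := hP.ne
  have hs : ({a, b, c, d, x} : Finset V).card = 5 := by
    simp [Finset.card_insert_of_notMem, n1, n2, n3, n4, n5, n6, ha.symm, hb.symm, hc.symm, hd.symm]
  have hcard : ∀ p q r t, IsP4 G p q r t → ({p, q, r, t} : Finset V).card = 4 := by
    intro p q r t h
    obtain ⟨n1, n2, n3, n4, n5, n6⟩ := h.ne
    simp [Finset.card_insert_of_notMem, n1, n2, n3, n4, n5, n6]
  have no : ∀ p q r t, ({p, q, r, t} : Finset V) ⊆ {a, b, c, d, x} →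
      x ∈ ({p, q, r, t} : Finset V) → ¬ IsP4 G p q r t := by
    intro p q r t hsub hx h
    have := hG _ hs
      (show ({p, q, r, t} : Finset V) ∈ _ from
        ⟨hsub, hcard _ _ _ _ h, (inducesP4_iff _ _).2 ⟨_, _, _, _, h, rfl⟩⟩)
      (show ({a, b, c, d} : Finset V) ∈ _ from
        ⟨by simp [Finset.insert_subset_iff], hcard _ _ _ _ hP, (inducesP4_iff _ _).2 ⟨_, _, _, _, hP, rfl⟩⟩)
    rw [this] at hx
    simp [ha, hb, hc, hd] at hx
  have k1 := no x a b c (by simp [Finset.insert_subset_iff]) (by simp)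
  have k2 := no x b c d (by simp [Finset.insert_subset_iff]) (by simp)
  have k3 := no a b c x (by simp [Finset.insert_subset_iff]) (by simp)
  have k4 := no b c d x (by simp [Finset.insert_subset_iff]) (by simp)
  have k5 := no a x c d (by simp [Finset.insert_subset_iff]) (by simp)
  have k6 := no a b x d (by simp [Finset.insert_subset_iff]) (by simp)
  have k7 := no a x d c (by simp [Finset.insert_subset_iff]) (by simp)
  have k8 := no d x a b (by simp [Finset.insert_subset_iff]) (by simp)
  obtain ⟨e1, e2, e3, e4, e5, e6⟩ := hP
  have e5' : ¬ G.Adj d a := fun h => e5 h.symm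
  have e6' : ¬ G.Adj d b := fun h => e6 h.symm
  simp only [IsP4, G.adj_comm a x, G.adj_comm b x, G.adj_comm c x, G.adj_comm d x,
    e1, e2, e3, e4, e5, e6, e3.symm, e5', e6', true_and, and_true,
    not_false_eq_true] at k1 k2 k3 k4 k5 k6 k7 k8
  clear no hs hcard
  by_cases xa : G.Adj x a <;> by_cases xb : G.Adj x b <;> by_cases xc : G.Adj x c <;>
    by_cases xd : G.Adj x d <;> simp_all

/-- The complement of the induced path `a - b - c - d` is the path `b - d - a - c`, so
`P₄`-sparseness is invariant under complementation. -/
theorem Local.compl {V : Type*} {G : SimpleGraph V} (hG : Local G) : Local Gᶜ := by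
  intro a b c d x hP ha hb hc hd
  obtain ⟨n1, n2, n3, n4, n5, n6⟩ := hP.ne
  have := hG b d a c x (by
    simp only [IsP4, compl_adj, G.adj_comm d a, G.adj_comm b a, G.adj_comm d c] at hP ⊢
    tauto) hb hd ha hc
  simp only [compl_adj]
  tauto

theorem P4Sparse.comap {V W : Type*} {G : SimpleGraph V} (hG : P4Sparse G) (φ : W ↪ V) :
    P4Sparse (G.comap φ) := by
  classical
  intro s hs A hA B hB
  have key : ∀ A : Finset W, A ∈ {W | W ⊆ s ∧ W.card = 4 ∧ InducesP4 (G.comap φ) W} →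
      A.map φ ∈ {W | W ⊆ s.map φ ∧ W.card = 4 ∧ InducesP4 G W} := by
    rintro A ⟨h1, h2, h3⟩
    refine ⟨Finset.map_subset_map.2 h1, by simpa using h2, ?_⟩
    obtain ⟨a, b, c, d, h, rfl⟩ := (inducesP4_iff _ _).1 h3
    exact (inducesP4_iff _ _).2 ⟨φ a, φ b, φ c, φ d, h, by simp⟩
  exact Finset.map_injective φ (hG _ (by simpa using hs) (key A hA) (key B hB))

/-! ### Connectedness and thin spiders on a vertex set -/

/-- `A` cannot be split into two nonempty parts without a `G`-edge between them; for nonempty `A`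
this is connectedness of the subgraph induced on `A`. -/
def Conn {V : Type*} (G : SimpleGraph V) (A : Finset V) : Prop :=
  ∀ B : Set V, (∃ x ∈ A, x ∈ B) → (∃ x ∈ A, x ∉ B) → ∃ x ∈ A, ∃ y ∈ A, x ∈ B ∧ y ∉ B ∧ G.Adj x y

theorem conn_univ {V : Type*} [Fintype V] {G : SimpleGraph V} (h : G.Connected) :
    Conn G Finset.univ := by
  rintro B ⟨x, -, hx⟩ ⟨y, -, hy⟩
  obtain ⟨p⟩ := h.preconnected x y
  obtain ⟨d, -, h1, h2⟩ := p.exists_boundary_dart B hx hy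
  exact ⟨d.fst, by simp, d.snd, by simp, h1, h2, d.adj⟩

/-- `G` restricted to `A` is a thin spider with body `C`, in which the leg attached to `c ∈ C` is
`f c`; the head is what remains of `A`. A thick spider of `G` is a thin spider of `Gᶜ`, with the
roles of body and legs exchanged. -/
structure Thin {V : Type*} (G : SimpleGraph V) (A C : Finset V) (f : V → V) : Prop where
  two : ∃ c ∈ C, ∃ c' ∈ C, c ≠ c'
  body_mem : ∀ c ∈ C, c ∈ A
  leg_mem : ∀ c ∈ C, f c ∈ A
  leg_notMem : ∀ c ∈ C, f c ∉ C
  inj : ∀ c ∈ C, ∀ c' ∈ C, f c = f c' → c = c'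
  clique : ∀ c ∈ C, ∀ c' ∈ C, c ≠ c' → G.Adj c c'
  indep : ∀ c ∈ C, ∀ c' ∈ C, ¬ G.Adj (f c) (f c')
  leg : ∀ c ∈ C, ∀ c' ∈ C, (G.Adj c (f c') ↔ c = c')
  head : ∀ r ∈ A, r ∉ C → (∀ c ∈ C, r ≠ f c) → ∀ c ∈ C, G.Adj r c ∧ ¬ G.Adj r (f c)

theorem Thin.isP4 {V : Type*} {G : SimpleGraph V} {A C : Finset V} {f : V → V}
    (h : Thin G A C f) {c c' : V} (hc : c ∈ C) (hc' : c' ∈ C) (hne : c ≠ c') :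
    IsP4 G (f c) c c' (f c') := by
  refine ⟨((h.leg c hc c hc).2 rfl).symm, h.clique c hc c' hc' hne, (h.leg c' hc' c' hc').2 rfl,
    fun h' => hne ((h.leg c' hc' c hc).1 h'.symm).symm, h.indep c hc c' hc',
    fun h' => hne ((h.leg c hc c' hc').1 h')⟩

/-! ### Adding a vertex to a spider -/

/-- Adding to a thin spider a vertex `v` that sees neither body nor legs: its neighbour `r` in the
head becomes a new body vertex, with leg `v`. -/
theorem Thin.extend_null {V : Type*} [DecidableEq V] {G : SimpleGraph V} (hL : Local G)
    {A C : Finset V} {f : V → V} {v : V} (hv : v ∈ A) (h : Thin G (A.erase v) C f) (hA : Conn G A)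
    (hn : ∀ c ∈ C, ¬ G.Adj v c ∧ ¬ G.Adj v (f c)) : ∃ C f, Thin G A C f := by
  obtain ⟨c0, hc0, c1, hc1, h01⟩ := h.two
  obtain ⟨x, -, r, hr, rfl, hrv, hadj⟩ := hA {v} ⟨v, hv, rfl⟩
    ⟨c0, Finset.mem_of_mem_erase (h.body_mem c0 hc0), Finset.ne_of_mem_erase (h.body_mem c0 hc0)⟩
  rw [Set.mem_singleton_iff] at hrv
  have hrC : r ∉ C := fun hc => (hn r hc).1 hadj
  have hrf : ∀ c ∈ C, r ≠ f c := by rintro c hc rfl; exact (hn c hc).2 hadj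
  have hrA : r ∈ A.erase x := by simp [hrv, hr]
  have hrh := h.head r hrA hrC hrf
  have hxC : x ∉ C := fun hc => by simpa using h.body_mem x hc
  have hxf : ∀ c ∈ C, f c ≠ x := by
    intro c hc he; have := h.leg_mem c hc; simp [he] at this
  have hne : ∀ c ∈ C, c ≠ r := by rintro c hc rfl; exact hrC hc
  have hup : ∀ c ∈ C, Function.update f r x c = f c := fun c hc =>
    Function.update_of_ne (hne c hc) _ _
  have hupr : Function.update f r x r = x := Function.update_self _ _ _
  have hP : IsP4 G x r c0 (f c0) := ⟨hadj, (hrh c0 hc0).1, (h.leg c0 hc0 c0 hc0).2 rfl,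
    (hn c0 hc0).1, (hn c0 hc0).2, (hrh c0 hc0).2⟩
  refine ⟨insert r C, Function.update f r x, ?_⟩
  constructor
  · exact ⟨c0, by simp [hc0], c1, by simp [hc1], h01⟩
  · intro c hc
    rcases Finset.mem_insert.1 hc with rfl | hc
    exacts [hr, Finset.mem_of_mem_erase (h.body_mem c hc)]
  · intro c hc
    rcases Finset.mem_insert.1 hc with rfl | hc
    · rwa [hupr]
    · rw [hup c hc]; exact Finset.mem_of_mem_erase (h.leg_mem c hc)
  · intro c hc
    rcases Finset.mem_insert.1 hc with rfl | hc
    · rw [hupr]; simp [hxC, Ne.symm hrv]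
    · rw [hup c hc]; simp [h.leg_notMem c hc, (hrf c hc).symm]
  · intro c hc c' hc'
    rw [Finset.mem_insert] at hc hc'
    rcases hc with rfl | hc <;> rcases hc' with rfl | hc'
    · simp
    · rw [hupr, hup c' hc']; exact fun he => absurd he.symm (hxf c' hc')
    · rw [hupr, hup c hc]; exact fun he => absurd he (hxf c hc)
    · rw [hup c hc, hup c' hc']; exact h.inj c hc c' hc'
  · intro c hc c' hc' hcc
    rw [Finset.mem_insert] at hc hc'
    rcases hc with rfl | hc <;> rcases hc' with rfl | hc'
    · exact absurd rfl hcc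
    · exact (hrh c' hc').1
    · exact (hrh c hc).1.symm
    · exact h.clique c hc c' hc' hcc
  · intro c hc c' hc'
    rw [Finset.mem_insert] at hc hc'
    rcases hc with rfl | hc <;> rcases hc' with rfl | hc'
    · simp
    · rw [hupr, hup c' hc']; exact (hn c' hc').2
    · rw [hupr, hup c hc]; exact fun h' => (hn c hc).2 h'.symm
    · rw [hup c hc, hup c' hc']; exact h.indep c hc c' hc'
  · intro c hc c' hc'
    rw [Finset.mem_insert] at hc hc'
    rcases hc with rfl | hc <;> rcases hc' with rfl | hc'
    · simp [hadj.symm]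
    · rw [hup c' hc']; simp [(hne c' hc').symm, (hrh c' hc').2]
    · rw [hupr]; simp [hne c hc, G.adj_comm c x, (hn c hc).1]
    · rw [hup c' hc']; exact h.leg c hc c' hc'
  · intro w hw hwC hwf
    rw [Finset.mem_insert, not_or] at hwC
    have hwx : w ≠ x := by have := hwf r (by simp); rwa [hupr] at this
    have hwf' : ∀ c ∈ C, w ≠ f c := by
      intro c hc; have := hwf c (by simp [hc]); rwa [hup c hc] at this
    have hwh := h.head w (by simp [hwx, hw]) hwC.2 hwf'
    intro c hc
    rcases Finset.mem_insert.1 hc with rfl | hc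
    · rw [hupr]
      have := hL _ _ _ _ w hP hwx hwC.1 (by rintro rfl; exact hwC.2 hc0) (hwf' c0 hc0)
      have := hwh c0 hc0
      tauto
    · rw [hup c hc]; exact hwh c hc

/-- Adding to a thin spider a vertex `v` that sees all of body and legs. As `v` has a
non-neighbour in the head, this is impossible with three or more body vertices; with two, the
spider is also thin in the complement. -/
theorem Thin.extend_full {V : Type*} [DecidableEq V] {G : SimpleGraph V} (hL : Local G)
    {A C : Finset V} {f : V → V} {v : V} (hv : v ∈ A) (h : Thin G (A.erase v) C f)
    (hA : Conn Gᶜ A)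
    (hn : ∀ c ∈ C, G.Adj v c ∧ G.Adj v (f c)) : ∃ C f, Thin Gᶜ A C f := by
  obtain ⟨c0, hc0, c1, hc1, h01⟩ := h.two
  obtain ⟨x, -, r, hr, rfl, hrv, hadj⟩ := hA {v} ⟨v, hv, rfl⟩
    ⟨c0, Finset.mem_of_mem_erase (h.body_mem c0 hc0), Finset.ne_of_mem_erase (h.body_mem c0 hc0)⟩
  rw [Set.mem_singleton_iff] at hrv
  rw [compl_adj] at hadj
  have hrC : r ∉ C := fun hc => hadj.2 (hn r hc).1
  have hrf : ∀ c ∈ C, r ≠ f c := by rintro c hc rfl; exact hadj.2 (hn c hc).2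
  have hrh := h.head r (by simp [hrv, hr]) hrC hrf
  have hC : ∀ c ∈ C, c = c0 ∨ c = c1 := by
    intro c hc
    by_contra! hcon
    have hP : IsP4 G r c1 x (f c0) := ⟨(hrh c1 hc1).1, (hn c1 hc1).1.symm, (hn c0 hc0).2,
      fun h' => hadj.2 h'.symm, (hrh c0 hc0).2, fun h' => h01 ((h.leg c1 hc1 c0 hc0).1 h').symm⟩
    have := hL _ _ _ _ c hP (by rintro rfl; exact hrC hc) hcon.2 (hn c hc).1.ne'
      (by rintro rfl; exact h.leg_notMem c0 hc0 hc)
    have h1 := (hrh c hc).1.symm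
    have h2 := fun h' => hcon.1 ((h.leg c hc c0 hc0).1 h')
    tauto
  have hf01 : f c0 ≠ f c1 := fun he => h01 (h.inj c0 hc0 c1 hc1 he)
  have hs0 := h.leg_notMem c0 hc0
  have hs1 := h.leg_notMem c1 hc1
  have n00 : f c0 ≠ c0 := by intro he; rw [he] at hs0; exact hs0 hc0
  have n01 : f c0 ≠ c1 := by intro he; rw [he] at hs0; exact hs0 hc1
  have n10 : f c1 ≠ c0 := by intro he; rw [he] at hs1; exact hs1 hc0
  have n11 : f c1 ≠ c1 := by intro he; rw [he] at hs1; exact hs1 hc1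
  obtain ⟨a1, a2, a3, a4, a5, a6⟩ := h.isP4 hc0 hc1 h01
  have g1 : (if f c1 = f c0 then c1 else c0) = c0 := if_neg hf01.symm
  have hT : Thin Gᶜ (A.erase x) {f c0, f c1} (fun s => if s = f c0 then c1 else c0) := by
    constructor
    · exact ⟨f c0, by simp, f c1, by simp, hf01⟩
    all_goals simp only [Finset.mem_insert, Finset.mem_singleton, forall_eq_or_imp, forall_eq,
      g1, if_true, compl_adj, not_or]
    · exact ⟨h.leg_mem c0 hc0, h.leg_mem c1 hc1⟩
    · exact ⟨h.body_mem c1 hc1, h.body_mem c0 hc0⟩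
    · exact ⟨⟨n01.symm, n11.symm⟩, n00.symm, n10.symm⟩
    · grind
    · grind [G.adj_comm]
    · grind [G.adj_comm]
    · grind [G.adj_comm]
    · intro w hw hws hwc
      have hwC : w ∉ C := fun hc => by have := hC w hc; tauto
      have hwh := h.head w hw hwC (by
        intro c hc
        rcases hC c hc with rfl | rfl
        exacts [hws.1, hws.2])
      have := hwh c0 hc0
      have := hwh c1 hc1
      tauto
  refine Thin.extend_null hL.compl hv hT hA ?_
  simp only [Finset.mem_insert, Finset.mem_singleton, forall_eq_or_imp, forall_eq, g1,
    if_true, compl_adj]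
  have := hn c0 hc0
  have := hn c1 hc1
  tauto

theorem Thin.extend {V : Type*} [DecidableEq V] {G : SimpleGraph V} (hL : Local G)
    {A C : Finset V} {f : V → V} {v : V} (hv : v ∈ A) (h : Thin G (A.erase v) C f)
    (hA : Conn G A) (hA' : Conn Gᶜ A) : (∃ C f, Thin G A C f) ∨ ∃ C f, Thin Gᶜ A C f := by
  obtain ⟨c0, hc0, c1, hc1, h01⟩ := h.two
  have hvC : ∀ c ∈ C, v ≠ c := by
    rintro c hc rfl; simpa using h.body_mem v hc
  have hvf : ∀ c ∈ C, v ≠ f c := by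
    intro c hc he; have := h.leg_mem c hc; simp [← he] at this
  -- `v` sees every pair `c, f c` in the same way as the pair `c0, f c0`.
  have key : ∀ c ∈ C, ∀ c' ∈ C, c ≠ c' → _ := fun c hc c' hc' hne =>
    hL _ _ _ _ v (h.isP4 hc hc' hne) (hvf c hc) (hvC c hc) (hvC c' hc') (hvf c' hc')
  have same : ∀ c ∈ C, (G.Adj v c ↔ G.Adj v c0) ∧ (G.Adj v (f c) ↔ G.Adj v (f c0)) := by
    intro c hc
    by_cases he : c = c0
    · subst he; simp
    · have := key c hc c0 hc0 he
      tauto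
  rcases key c0 hc0 c1 hc1 h01 with k | k | k
  · left
    exact h.extend_null hL hv hA fun c hc => by have := same c hc; tauto
  · right
    exact h.extend_full hL hv hA' fun c hc => by have := same c hc; tauto
  · left
    refine ⟨C, f, h.two, fun c hc => Finset.mem_of_mem_erase (h.body_mem c hc),
      fun c hc => Finset.mem_of_mem_erase (h.leg_mem c hc), h.leg_notMem, h.inj, h.clique, h.indep,
      h.leg, ?_⟩
    intro r hr hrC hrf c hc
    by_cases hrv : r = v
    · subst hrv
      have := same c hc; tauto
    · exact h.head r (by simp [hr, hrv]) hrC hrf c hc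

/-! ### A vertex whose removal disconnects the graph -/

/-- If `B` separates `A.erase v` and `v` has a non-neighbour `y0` in `A ∩ B`, then the rest of
`A.erase v` is a single vertex `z`, and `A` is a thin spider whose body contains `v` with leg `z`;
the other legs are the non-neighbours of `v` in `B`. -/
theorem thin_of_cut {V : Type*} [DecidableEq V] {G : SimpleGraph V} (hL : Local G)
    {A : Finset V} {v : V} (hv : v ∈ A) (hA : Conn G A) {B : Set V}
    (hB' : ∃ x ∈ A.erase v, x ∉ B)
    (hcut : ∀ x ∈ A.erase v, ∀ y ∈ A.erase v, x ∈ B → y ∉ B → ¬ G.Adj x y)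
    {y0 : V} (hy0 : y0 ∈ A.erase v) (hy0B : y0 ∈ B) (hy0v : ¬ G.Adj v y0) :
    ∃ C f, Thin G A C f := by
  classical
  simp only [Finset.mem_erase] at hB' hcut hy0
  obtain ⟨z0, ⟨hz0v, hz0A⟩, hz0B⟩ := hB'
  -- an edge from the side of `z0` must end in `v`
  obtain ⟨z, hzA, z', hz'A, hzB, hz'B, hzz⟩ := hA {x | x ∉ B ∧ x ≠ v} ⟨z0, hz0A, hz0B, hz0v⟩
    ⟨v, hv, by simp⟩
  simp only [Set.mem_ofPred_eq, not_and, not_not] at hzB hz'B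
  obtain ⟨hzB, hzv⟩ := hzB
  have hz' : z' = v := by
    by_contra hne
    exact hcut z' ⟨hne, hz'A⟩ z ⟨hzv, hzA⟩ (by tauto) hzB hzz.symm
  subst z'
  -- an edge `x y` inside `B` with `v` adjacent to `x` and not to `y`
  have hedge : ∀ y ∈ A, y ∈ B → y ≠ v → ∀ x ∈ A, x ∈ B → G.Adj v x → ¬ G.Adj v y → G.Adj x y →
      IsP4 G z v x y := fun y hyA hyB hyv x hxA hxB hx hy hxy =>
    ⟨hzz, hx, hxy, fun h' => hcut x ⟨hx.ne', hxA⟩ z ⟨hzv, hzA⟩ hxB hzB h'.symm,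
      fun h' => hcut y ⟨hyv, hyA⟩ z ⟨hzv, hzA⟩ hyB hzB h'.symm, hy⟩
  have hex : ∀ y ∈ A, y ∈ B → y ≠ v → ¬ G.Adj v y → ∃ x ∈ A, x ∈ B ∧ G.Adj v x ∧ G.Adj x y := by
    by_contra! hcon
    obtain ⟨y1, hy1A, hy1B, hy1v, hy1n, hy1⟩ := hcon
    obtain ⟨y, hyA, x, hxA, hy, hx, hyx⟩ := hA
      {y | y ∈ B ∧ y ≠ v ∧ ¬ G.Adj v y ∧ ∀ x ∈ A, x ∈ B → G.Adj v x → ¬ G.Adj x y}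
      ⟨y1, hy1A, hy1B, hy1v, hy1n, hy1⟩ ⟨v, hv, by simp⟩
    obtain ⟨hyB, hyv, hyn, hyno⟩ := hy
    have hxv : x ≠ v := by rintro rfl; exact hyn hyx.symm
    have hxB : x ∈ B := by
      by_contra hxB; exact hcut y ⟨hyv, hyA⟩ x ⟨hxv, hxA⟩ hyB hxB hyx
    have hxn : ¬ G.Adj v x := fun h' => hyno x hxA hxB h' hyx.symm
    simp only [Set.mem_ofPred_eq, not_and, not_forall, not_not] at hx
    obtain ⟨u, huA, huB, huv, hux⟩ := hx hxB hxv hxn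
    have := hL _ _ _ _ y (hedge x hxA hxB hxv u huA huB huv hxn hux)
      (by rintro rfl; exact hzB hyB) hyv (by rintro rfl; exact hyn huv) hyx.ne
    have := G.adj_comm y v
    tauto
  obtain ⟨x0, hx0A, hx0B, hx0v, hx0y⟩ := hex y0 hy0.2 hy0B hy0.1 hy0v
  have hP0 := hedge y0 hy0.2 hy0B hy0.1 x0 hx0A hx0B hx0v hy0v hx0y
  have hz : ∀ w ∈ A, w ∉ B → w ≠ v → w = z := by
    by_contra! hcon
    obtain ⟨w1, hw1A, hw1B, hw1v, hw1z⟩ := hcon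
    obtain ⟨w, hwA, u, huA, hw, hu, hwu⟩ := hA {w | w ∉ B ∧ w ≠ v ∧ w ≠ z}
      ⟨w1, hw1A, hw1B, hw1v, hw1z⟩ ⟨v, hv, by simp⟩
    obtain ⟨hwB, hwv, hwz⟩ := hw
    have hwx : ¬ G.Adj w x0 := fun h' => hcut x0 ⟨hx0v.ne', hx0A⟩ w ⟨hwv, hwA⟩ hx0B hwB h'.symm
    have := hL _ _ _ _ w hP0 hwz hwv (by rintro rfl; exact hwB hx0B)
      (by rintro rfl; exact hwB hy0B)
    have huv : u ≠ v := by rintro rfl; tauto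
    have huz : u ≠ z := by rintro rfl; tauto
    have huB : u ∈ B := by
      by_contra huB; exact hu ⟨huB, huv, huz⟩
    exact hcut u ⟨huv, huA⟩ w ⟨hwv, hwA⟩ huB hwB hwu.symm
  -- how a third vertex sees the path `z - v - x - y`
  have hthird : ∀ y ∈ A, y ∈ B → y ≠ v → ∀ x ∈ A, x ∈ B → G.Adj v x → ¬ G.Adj v y → G.Adj x y →
      ∀ w ∈ A, w ∈ B → w ≠ v → w ≠ x → w ≠ y → ¬ G.Adj w z ∧ ¬ G.Adj w y ∧
        (G.Adj v w ↔ G.Adj w x) := by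
    intro y hyA hyB hyv x hxA hxB hx hy hxy w hwA hwB hwv hwx hwy
    have h1 := hL _ _ _ _ w (hedge y hyA hyB hyv x hxA hxB hx hy hxy)
      (by rintro rfl; exact hzB hwB) hwv hwx hwy
    have h2 := hcut w ⟨hwv, hwA⟩ z ⟨hzv, hzA⟩ hwB hzB
    rw [G.adj_comm v w]
    tauto
  let P : V → V → Prop := fun x y => y ∈ A ∧ y ∈ B ∧ y ≠ v ∧ ¬ G.Adj v y ∧ G.Adj x y
  let g : V → V := fun x => if h : ∃ y, P x y then h.choose else z
  let X : Finset V := A.filter fun x => x ∈ B ∧ G.Adj v x ∧ ∃ y, P x y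
  have hX : ∀ x ∈ X, x ∈ A ∧ x ∈ B ∧ G.Adj v x ∧ P x (g x) := by
    intro x hx
    obtain ⟨hxA, hxB, hxv, hy⟩ := Finset.mem_filter.1 hx
    refine ⟨hxA, hxB, hxv, ?_⟩
    simp only [g, dif_pos hy]
    exact hy.choose_spec
  let f : V → V := Function.update g v z
  have hvX : v ∉ X := fun h => (hX v h).2.2.1.ne rfl
  have hfv : f v = z := Function.update_self _ _ _
  have hf : ∀ x ∈ X, f x = g x := fun x hx =>
    Function.update_of_ne (by rintro rfl; exact hvX hx) _ _
  have hxX : x0 ∈ X := Finset.mem_filter.2 ⟨hx0A, hx0B, hx0v, y0, hy0.2, hy0B, hy0.1, hy0v, hx0y⟩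
  -- `X` is matched to the non-neighbours of `v` in `B` by `g`
  have hXt : ∀ x ∈ X, ∀ w ∈ A, w ∈ B → w ≠ v → w ≠ x → w ≠ g x →
      ¬ G.Adj w z ∧ ¬ G.Adj w (g x) ∧ (G.Adj v w ↔ G.Adj w x) := by
    intro x hx
    obtain ⟨hxA, hxB, hxv, h1, h2, h3, h4, h5⟩ := hX x hx
    exact hthird (g x) h1 h2 h3 x hxA hxB hxv h4 h5
  have hXz : ∀ w ∈ A, w ∈ B → w ≠ v → ¬ G.Adj w z := fun w hwA hwB hwv =>
    hcut w ⟨hwv, hwA⟩ z ⟨hzv, hzA⟩ hwB hzB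
  have hleg : ∀ x ∈ X, ∀ x' ∈ X, G.Adj x (g x') → x = x' := by
    intro x hx x' hx' hadj
    by_contra hne
    obtain ⟨hxA, hxB, hxv, -⟩ := hX x hx
    exact (hXt x' hx' x hxA hxB hxv.ne' hne hadj.ne).2.1 hadj
  refine ⟨insert v X, f, ?_⟩
  constructor
  · exact ⟨v, by simp, x0, by simp [hxX], hx0v.ne⟩
  · intro c hc
    rcases Finset.mem_insert.1 hc with rfl | hc
    exacts [hv, (hX c hc).1]
  · intro c hc
    rcases Finset.mem_insert.1 hc with rfl | hc
    · rwa [hfv]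
    · rw [hf c hc]; exact (hX c hc).2.2.2.1
  · intro c hc
    rcases Finset.mem_insert.1 hc with rfl | hc
    · rw [hfv, Finset.mem_insert, not_or]
      exact ⟨hzv, fun h' => hzB (hX z h').2.1⟩
    · rw [hf c hc, Finset.mem_insert, not_or]
      obtain ⟨-, -, -, h1, h2, h3, h4, h5⟩ := hX c hc
      exact ⟨h3, fun h' => h4 (hX _ h').2.2.1⟩
  · intro c hc c' hc'
    rw [Finset.mem_insert] at hc hc'
    rcases hc with rfl | hc <;> rcases hc' with rfl | hc'
    · simp
    · rw [hfv, hf c' hc']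
      intro he
      exact absurd (he ▸ (hX c' hc').2.2.2.2.1) hzB
    · rw [hfv, hf c hc]
      intro he
      exact absurd (he ▸ (hX c hc).2.2.2.2.1) hzB
    · rw [hf c hc, hf c' hc']
      intro he
      exact hleg c hc c' hc' (he ▸ (hX c hc).2.2.2.2.2.2.2)
  · intro c hc c' hc' hcc
    rw [Finset.mem_insert] at hc hc'
    rcases hc with rfl | hc <;> rcases hc' with rfl | hc'
    · exact absurd rfl hcc
    · exact (hX c' hc').2.2.1
    · exact (hX c hc).2.2.1.symm
    · obtain ⟨hcA, hcB, hcv, -⟩ := hX c hc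
      refine (hXt c' hc' c hcA hcB hcv.ne' hcc ?_).2.2.1 hcv
      intro he
      exact (hX c' hc').2.2.2.2.2.2.1 (he ▸ hcv)
  · intro c hc c' hc'
    rw [Finset.mem_insert] at hc hc'
    rcases hc with rfl | hc <;> rcases hc' with rfl | hc'
    · simp
    · rw [hfv, hf c' hc']
      obtain ⟨-, -, -, h1, h2, h3, h4, h5⟩ := hX c' hc'
      exact fun h' => hXz _ h1 h2 h3 h'.symm
    · rw [hfv, hf c hc]
      obtain ⟨-, -, -, h1, h2, h3, h4, h5⟩ := hX c hc
      exact hXz _ h1 h2 h3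
    · rw [hf c hc, hf c' hc']
      intro hadj
      obtain ⟨-, -, -, h1, h2, h3, h4, h5⟩ := hX c hc
      obtain ⟨-, -, hv', -⟩ := hX c' hc'
      exact (hXt c' hc' (g c) h1 h2 h3 (fun he => h4 (he ▸ hv')) hadj.ne).2.1 hadj
  · intro c hc c' hc'
    rw [Finset.mem_insert] at hc hc'
    rcases hc with rfl | hc <;> rcases hc' with rfl | hc'
    · simp [hfv, hzz.symm]
    · rw [hf c' hc']
      obtain ⟨-, -, hv', h1, h2, h3, h4, h5⟩ := hX c' hc'
      simp [h4, hv'.ne]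
    · rw [hfv]
      obtain ⟨hcA, hcB, hcv, -⟩ := hX c hc
      simp [hXz c hcA hcB hcv.ne', hcv.ne']
    · rw [hf c' hc']
      refine ⟨hleg c hc c' hc', ?_⟩
      rintro rfl
      exact (hX c hc).2.2.2.2.2.2.2
  · intro w hwA hwC hwf
    rw [Finset.mem_insert, not_or] at hwC
    have hwz : w ≠ z := by have := hwf v (by simp); rwa [hfv] at this
    have hwB : w ∈ B := by by_contra hwB; exact hwz (hz w hwA hwB hwC.1)
    have hwf' : ∀ x ∈ X, w ≠ g x := by
      intro x hx; have := hwf x (by simp [hx]); rwa [hf x hx] at this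
    have hwv : G.Adj v w := by
      by_contra hwv
      obtain ⟨x, hxA, hxB, hxv, hxw⟩ := hex w hwA hwB hwC.1 hwv
      have hx : x ∈ X := Finset.mem_filter.2 ⟨hxA, hxB, hxv, w, hwA, hwB, hwC.1, hwv, hxw⟩
      exact hwv ((hXt x hx w hwA hwB hwC.1 hxw.ne' (hwf' x hx)).2.2.2 hxw.symm)
    intro c hc
    rcases Finset.mem_insert.1 hc with rfl | hc
    · rw [hfv]; exact ⟨hwv.symm, hXz w hwA hwB hwC.1⟩
    · rw [hf c hc]
      have := hXt c hc w hwA hwB hwC.1 (by rintro rfl; exact hwC.2 hc) (hwf' c hc)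
      exact ⟨this.2.2.1 hwv, this.2.1⟩

theorem thin_of_not_conn {V : Type*} [DecidableEq V] {G : SimpleGraph V} (hL : Local G)
    {A : Finset V} {v : V} (hv : v ∈ A) (hA : Conn G A) (hA' : Conn Gᶜ A)
    (hn : ¬ Conn G (A.erase v)) : ∃ C f, Thin G A C f := by
  unfold Conn at hn
  push Not at hn
  obtain ⟨B, ⟨b, hb, hbB⟩, ⟨b', hb', hbB'⟩, hcut⟩ := hn
  obtain ⟨x, -, y, hyA, rfl, hyv, hadj⟩ := hA' {v} ⟨v, hv, rfl⟩
    ⟨b, Finset.mem_of_mem_erase hb, Finset.ne_of_mem_erase hb⟩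
  have hy : y ∈ A.erase x := by simp at hyv; simp [hyv, hyA]
  by_cases hyB : y ∈ B
  · exact thin_of_cut hL hv hA ⟨b', hb', hbB'⟩ hcut hy hyB hadj.2
  · exact thin_of_cut hL hv hA (B := Bᶜ) ⟨b, hb, by simpa using hbB⟩
      (fun x hx y hy h1 h2 h3 => hcut y hy x hx (by simpa using h2) h1 h3.symm) hy hyB hadj.2

/-! ### The induction -/

/-- The structure theorem for induced subgraphs, by induction on the number of vertices. -/
theorem exists_thin {V : Type*} [DecidableEq V] {G : SimpleGraph V} (hL : Local G) (A : Finset V)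
    (h2 : 2 ≤ A.card) (hA : Conn G A) (hA' : Conn Gᶜ A) :
    (∃ C f, Thin G A C f) ∨ ∃ C f, Thin Gᶜ A C f := by
  induction A using Finset.strongInduction with
  | H A ih =>
    obtain ⟨v, hv⟩ : A.Nonempty := Finset.card_pos.1 (by omega)
    have hcard := Finset.card_erase_of_mem hv
    by_cases h1 : Conn G (A.erase v)
    · by_cases h1' : Conn Gᶜ (A.erase v)
      · by_cases h3 : 2 ≤ (A.erase v).card
        · rcases ih _ (Finset.erase_ssubset hv) h3 h1 h1' with ⟨C, f, h⟩ | ⟨C, f, h⟩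
          · exact h.extend hL hv hA hA'
          · have := h.extend hL.compl hv hA' (by rwa [compl_compl])
            rw [compl_compl] at this
            exact this.symm
        · -- two vertices are either adjacent or not, so one of `G`, `Gᶜ` is disconnected
          obtain ⟨u, hu⟩ := Finset.card_eq_one.1 (show (A.erase v).card = 1 by omega)
          have hmem : ∀ w ∈ A, w ≠ v → w = u := by
            intro w hw hwv
            have : w ∈ A.erase v := by simp [hw, hwv]
            simpa [hu] using this
          have huA : u ∈ A ∧ u ≠ v := by
            have : u ∈ A.erase v := by simp [hu]
            simpa [and_comm] using this
          obtain ⟨x, -, y, hy, rfl, hyx, ha⟩ := hA {v} ⟨v, hv, rfl⟩ ⟨u, huA.1, huA.2⟩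
          obtain ⟨x', -, y', hy', rfl, hyx', ha'⟩ := hA' {x} ⟨x, hv, rfl⟩ ⟨u, huA.1, huA.2⟩
          rw [hmem y hy hyx] at ha
          rw [hmem y' hy' hyx'] at ha'
          exact absurd ha ha'.2
      · right
        exact thin_of_not_conn hL.compl hv hA' (by rwa [compl_compl]) h1'
    · left
      exact thin_of_not_conn hL hv hA hA' h1

/-! ### Isomorphism with the model spiders -/

/-- A spider structure on all of `V` lists the vertices by body, legs and head. -/
theorem Thin.exists_equiv {V : Type*} [Fintype V] {G : SimpleGraph V} {C : Finset V} {f : V → V}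
    (h : Thin G Finset.univ C f) :
    ∃ (k j : ℕ) (e : Fin k ⊕ Fin k ⊕ Fin j ≃ V), 2 ≤ k ∧
      (∀ i m, G.Adj (e (.inl i)) (e (.inl m)) ↔ i ≠ m) ∧
      (∀ i m, ¬ G.Adj (e (.inr (.inl i))) (e (.inr (.inl m)))) ∧
      (∀ i m, G.Adj (e (.inl i)) (e (.inr (.inl m))) ↔ i = m) ∧
      (∀ i r, G.Adj (e (.inl i)) (e (.inr (.inr r)))) ∧
      (∀ i r, ¬ G.Adj (e (.inr (.inl i))) (e (.inr (.inr r)))) := by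
  classical
  let R : Finset V := Finset.univ.filter fun r => r ∉ C ∧ ∀ c ∈ C, r ≠ f c
  have hR : ∀ r ∈ R, r ∉ C ∧ ∀ c ∈ C, r ≠ f c := fun r hr => (Finset.mem_filter.1 hr).2
  let c : Fin C.card → V := fun i => (C.equivFin.symm i : V)
  let r : Fin R.card → V := fun i => (R.equivFin.symm i : V)
  have hc : ∀ i, c i ∈ C := fun i => (C.equivFin.symm i).2
  have hr : ∀ i, r i ∈ R := fun i => (R.equivFin.symm i).2
  have hci : ∀ i m, c i = c m ↔ i = m := by
    intro i m
    simp [c]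
  have hri : ∀ i m, r i = r m ↔ i = m := by
    intro i m
    simp [r]
  let e : Fin C.card ⊕ Fin C.card ⊕ Fin R.card → V := Sum.elim c (Sum.elim (f ∘ c) r)
  have he : Function.Bijective e := by
    constructor
    · rintro (i | i | i) (m | m | m) him <;>
        simp only [e, Sum.elim_inl, Sum.elim_inr, Function.comp] at him
      · rw [(hci _ _).1 him]
      · exact absurd (him ▸ hc i) (h.leg_notMem _ (hc m))
      · exact absurd (him ▸ hc i) (hR _ (hr m)).1
      · exact absurd (him ▸ hc m) (h.leg_notMem _ (hc i))
      · rw [(hci _ _).1 (h.inj _ (hc i) _ (hc m) him)]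
      · exact absurd him.symm ((hR _ (hr m)).2 _ (hc i))
      · exact absurd (him ▸ hc m) (hR _ (hr i)).1
      · exact absurd him ((hR _ (hr i)).2 _ (hc m))
      · rw [(hri _ _).1 him]
    · intro x
      by_cases hx : x ∈ C
      · exact ⟨.inl (C.equivFin ⟨x, hx⟩), by simp [e, c]⟩
      by_cases hx' : ∀ c ∈ C, x ≠ f c
      · exact ⟨.inr (.inr (R.equivFin ⟨x, Finset.mem_filter.2 ⟨Finset.mem_univ _, hx, hx'⟩⟩)), by simp [e, r]⟩
      push Not at hx'
      obtain ⟨c', hc', rfl⟩ := hx'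
      exact ⟨.inr (.inl (C.equivFin ⟨c', hc'⟩)), by simp [e, c]⟩
  refine ⟨C.card, R.card, Equiv.ofBijective e he, ?_, ?_, ?_, ?_, ?_, ?_⟩
  · obtain ⟨a, ha, b, hb, hab⟩ := h.two
    exact Finset.one_lt_card.2 ⟨a, ha, b, hb, hab⟩
  · intro i m
    change G.Adj (c i) (c m) ↔ _
    refine ⟨fun h' he => h'.ne ((hci _ _).2 he), fun hne => h.clique _ (hc i) _ (hc m) ?_⟩
    rwa [Ne, hci]
  · exact fun i m => h.indep _ (hc i) _ (hc m)
  · intro i m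
    change G.Adj (c i) (f (c m)) ↔ _
    rw [h.leg _ (hc i) _ (hc m), hci]
  · exact fun i m => (h.head _ (Finset.mem_univ _) (hR _ (hr m)).1 (hR _ (hr m)).2 _
      (hc i)).1.symm
  · exact fun i m h' => (h.head _ (Finset.mem_univ _) (hR _ (hr m)).1 (hR _ (hr m)).2 _
      (hc i)).2 h'.symm

theorem Thin.exists_thinSpider {V : Type*} [Fintype V] {G : SimpleGraph V} (hG : P4Sparse G)
    {C : Finset V} {f : V → V} (h : Thin G Finset.univ C f) :
    ∃ (k j : ℕ) (H : SimpleGraph (Fin j)), 2 ≤ k ∧ P4Sparse H ∧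
      Nonempty (G ≃g thinSpider k j H) := by
  obtain ⟨k, j, e, hk, h1, h2, h3, h4, h5⟩ := h.exists_equiv
  refine ⟨k, j, G.comap (fun r => e (.inr (.inr r))), hk,
    hG.comap ⟨_, e.injective.comp (Sum.inr_injective.comp Sum.inr_injective)⟩,
    ⟨RelIso.symm ⟨e, ?_⟩⟩⟩
  rintro (i | i | i) (m | m | m)
  · simp [thinSpider, thinSpiderRel, h1]
  · simp [thinSpider, thinSpiderRel, h3, eq_comm]
  · simp [thinSpider, thinSpiderRel, h4]
  · rw [G.adj_comm]; simp [thinSpider, thinSpiderRel, h3, eq_comm]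
  · simp [thinSpider, thinSpiderRel, h2]
  · simp [thinSpider, thinSpiderRel, h5]
  · rw [G.adj_comm]; simp [thinSpider, thinSpiderRel, h4]
  · rw [G.adj_comm]; simp [thinSpider, thinSpiderRel, h5]
  · have := fun h : G.Adj (e (.inr (.inr i))) (e (.inr (.inr m))) => h.ne
    simp [thinSpider, thinSpiderRel, G.adj_comm (e (.inr (.inr m)))] at this ⊢
    tauto

/-- Complementing a thin spider of `Gᶜ` exchanges body and legs and gives a thick spider. -/
theorem Thin.exists_thickSpider {V : Type*} [Fintype V] {G : SimpleGraph V} (hG : P4Sparse G)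
    {C : Finset V} {f : V → V} (h : Thin Gᶜ Finset.univ C f) :
    ∃ (k j : ℕ) (H : SimpleGraph (Fin j)), 2 ≤ k ∧ P4Sparse H ∧
      Nonempty (G ≃g thickSpider k j H) := by
  obtain ⟨k, j, e, hk, h1, h2, h3, h4, h5⟩ := h.exists_equiv
  simp only [compl_adj, not_and, not_not, ne_eq, e.apply_eq_iff_eq, Sum.inl.injEq, Sum.inr.injEq,
    reduceCtorEq, not_false_eq_true, true_and] at h1 h2 h3 h4 h5
  let e' : Fin k ⊕ Fin k ⊕ Fin j → V :=
    Sum.elim (fun i => e (.inr (.inl i)))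
      (Sum.elim (fun i => e (.inl i)) (fun r => e (.inr (.inr r))))
  have he' : Function.Bijective e' := by
    constructor
    · rintro (i | i | i) (m | m | m) <;> simp [e']
    · intro x
      obtain ⟨y, rfl⟩ := e.surjective x
      rcases y with i | i | i
      exacts [⟨.inr (.inl i), rfl⟩, ⟨.inl i, rfl⟩, ⟨.inr (.inr i), rfl⟩]
  refine ⟨k, j, G.comap (fun r => e (.inr (.inr r))), hk,
    hG.comap ⟨_, e.injective.comp (Sum.inr_injective.comp Sum.inr_injective)⟩,
    ⟨RelIso.symm ⟨Equiv.ofBijective e' he', ?_⟩⟩⟩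
  rintro (i | i | i) (m | m | m) <;> simp only [Equiv.ofBijective_apply, e', Sum.elim_inl,
    Sum.elim_inr]
  · have := h2 i m
    have := fun h : G.Adj (e (.inr (.inl i))) (e (.inr (.inl m))) => h.ne
    simp [thickSpider, thickSpiderRel] at this ⊢
    tauto
  · have := h3 m i
    rw [G.adj_comm]; simp [thickSpider, thickSpiderRel]
    grind
  · simp [thickSpider, thickSpiderRel, h5]
  · have := h3 i m
    simp [thickSpider, thickSpiderRel]
    grind
  · have := h1 i m
    have := fun h : G.Adj (e (.inl i)) (e (.inl m)) => h.ne
    simp [thickSpider, thickSpiderRel] at this ⊢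
    tauto
  · simp [thickSpider, thickSpiderRel, h4]
  · rw [G.adj_comm]; simp [thickSpider, thickSpiderRel, h5]
  · rw [G.adj_comm]; simp [thickSpider, thickSpiderRel, h4]
  · have := fun h : G.Adj (e (.inr (.inr i))) (e (.inr (.inr m))) => h.ne
    simp [thickSpider, thickSpiderRel, G.adj_comm (e (.inr (.inr m)))] at this ⊢
    tauto

/-- A `P₄`-sparse graph with at least two vertices is disconnected, or has a
disconnected complement, or is a spider (thin or thick) whose head induces a
`P₄`-sparse graph. -/
theorem P4Sparse_structure {V : Type*} [Fintype V] (G : SimpleGraph V)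
    (hG : P4Sparse G) (hV : 2 ≤ Fintype.card V) :
    ¬ G.Connected ∨ ¬ Gᶜ.Connected ∨
      ∃ (k j : ℕ) (H : SimpleGraph (Fin j)), 2 ≤ k ∧ P4Sparse H ∧
        (Nonempty (G ≃g thinSpider k j H) ∨ Nonempty (G ≃g thickSpider k j H)) := by
  classical
  by_cases h1 : G.Connected
  · by_cases h2 : Gᶜ.Connected
    · refine .inr (.inr ?_)
      rcases exists_thin hG.isLocal Finset.univ (by simpa using hV) (conn_univ h1) (conn_univ h2)
        with ⟨C, f, h⟩ | ⟨C, f, h⟩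
      · obtain ⟨k, j, H, hk, hH, hiso⟩ := h.exists_thinSpider hG
        exact ⟨k, j, H, hk, hH, .inl hiso⟩
      · obtain ⟨k, j, H, hk, hH, hiso⟩ := h.exists_thickSpider hG
        exact ⟨k, j, H, hk, hH, .inr hiso⟩
    · exact .inr (.inl h2)
  · exact .inl h1
end

section
/- Let G = (V,E) be a (7,3)-graph that is p4-connected. Then |V| < 7 or G is a headless spider. -/
/-!
Let `G` be a `p₄`-connected `(7,3)`-graph on at least seven vertices; it is shown to be a headless
spider. The case distinctions about graphs on at most eight vertices are evaluated by the kernel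
on an encoding of graphs as lists of bitmasks (`Rep`); everything else is argued by hand.

*Crossing pairs* (`exists_crossing_pair`). Let `H` be a proper nonempty vertex set that is a union
of induced `P₄`s and such that no vertex `x` outside `H` lies in an induced `P₄` contained in
`H ∪ {x}` (`NoExt`). Some induced `P₄` `W` meets both `H` and its complement. It has at least two
vertices outside `H`, and it cannot have three: if `h` is its vertex in `H` and `Q ⊆ H` is a `P₄`
through `h`, then each vertex outside `H` sees none, all, or exactly the two inner vertices of `Q`,
and in all these cases `Q ∪ W` is a set of seven vertices with four `P₄`s. So `W` has exactly two
vertices outside `H`.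

*Sparseness* (`p4Sparse_of_sevenThree`). Suppose a `5`-set `S` contains two `P₄`s. If no outside
vertex extends `S`, the crossing pair `x, y` over `S` gives a `7`-set with four `P₄`s. Otherwise
some `z` extends `S`, and then no vertex extends `S ∪ {z}`, since together they would give a fourth
`P₄` in a `7`-set; the crossing pair over `S ∪ {z}` again gives a `7`-set with four `P₄`s.
So `G` is `P₄`-sparse.

*Spiders* (`Sp.exists_ext`, `Sp.cons`). In a `P₄`-sparse graph nothing extends a `P₄`, so the
crossing pair over any `P₄` exists, and completes it to a headless spider with three legs. Likewise
nothing extends a headless spider `H` with `k ≥ 3` legs; if `H` is not everything, the crossing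
pair `x, y` over `H` turns out to be a new body vertex and a new leg, of the same thin or thick
type. This is checked on the subspiders with three legs, each containing the vertices of `W ∩ H`.
By finiteness the growth stops, and then `H` is all of `G`.
-/

open SimpleGraph Polynomial

/-- A `(7,3)`-graph: every set of `7` vertices contains at most three `4`-element
subsets inducing a path `P₄`. -/
def SevenThreeGraph {V : Type*} (G : SimpleGraph V) : Prop :=
  ∀ s : Finset V, s.card = 7 →
    {W : Finset V | W ⊆ s ∧ W.card = 4 ∧ InducesP4 G W}.encard ≤ 3

/-- A graph is `p₄`-connected if for every partition of the vertex set into two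
nonempty parts, some induced `P₄` meets both parts. -/
def P4Connected {V : Type*} (G : SimpleGraph V) : Prop :=
  ∀ A : Set V, A.Nonempty → Aᶜ.Nonempty →
    ∃ W : Finset V, W.card = 4 ∧ InducesP4 G W ∧
      ((W : Set V) ∩ A).Nonempty ∧ ((W : Set V) ∩ Aᶜ).Nonempty

/-- Relation generating the edges of a headless spider on `2k` vertices: body
`C = inl` is a clique, legs `S = inr` form an independent set, and `sᵢ ~ cₘ`
iff `i = m` (thin case, `thick = false`) or iff `i ≠ m` (thick case). -/
def headlessSpiderRel (k : ℕ) (thick : Bool) :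
    (Fin k ⊕ Fin k) → (Fin k ⊕ Fin k) → Prop := fun u v =>
  (∃ i m : Fin k, u = Sum.inl i ∧ v = Sum.inl m) ∨
  (∃ i m : Fin k, (if thick then i ≠ m else i = m) ∧ u = Sum.inl i ∧ v = Sum.inr m)

/-- The headless (thin or thick) spider on `2k` vertices. -/
def headlessSpider (k : ℕ) (thick : Bool) : SimpleGraph (Fin k ⊕ Fin k) :=
  SimpleGraph.fromRel (headlessSpiderRel k thick)

instance (k : ℕ) (t : Bool) : DecidableRel (headlessSpiderRel k t) := fun u v => by
  unfold headlessSpiderRel; infer_instance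

instance (k : ℕ) (t : Bool) : DecidableRel (headlessSpider k t).Adj := fun u v =>
  inferInstanceAs (Decidable (u ≠ v ∧ (headlessSpiderRel k t u v ∨ headlessSpiderRel k t v u)))

namespace SevenThree

/-! ### Encoding small induced subgraphs by bitmasks -/

/-- Entry `n` of the list, with value `0` past the end; a structurally recursive lookup that the kernel
reduces quickly. -/
def nth : List ℕ → ℕ → ℕ
  | [], _ => 0
  | a :: _, 0 => a
  | _ :: l, n + 1 => nth l n

/-- A graph on the vertices `0, 1, …` is encoded by a list `r` whose entry `j` is the bitmask of the
neighbours of `j` among the smaller vertices. For `i < j`, `bit r i j` says that `i` and `j` are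
adjacent. -/
def bit (r : List ℕ) (i j : ℕ) : Bool := Nat.beq (Nat.land (Nat.shiftRight (nth r j) i) 1) 1

/-- Whether the six given adjacencies between four distinct vertices `a, b, c, d` form a path `P₄`, in
whichever order. -/
def isP4Bool (ab ac ad bc bd cd : Bool) : Bool :=
  bif ab then
    bif cd then bif ac then !(ad || bc || bd) else bif ad then !(bc || bd) else xor bc bd
    else bif ac then bd && !(ad || bc) else ad && bc && !bd
  else bif cd then bif ac then bd && !(ad || bc) else ad && bc && !bd
    else bif ac then bif ad then xor bc bd else bd && bc else ad && bc && bd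

/-- Whether the listed four vertices of the graph encoded by `r` induce a `P₄`; `false` for lists of
another length. -/
def isP4 (r : List ℕ) : List ℕ → Bool
  | [i, j, k, l] =>
    isP4Bool (bit r i j) (bit r i k) (bit r i l) (bit r j k) (bit r j l) (bit r k l)
  | _ => false

/-- The number of `4`-element subsets of `idx` inducing a `P₄` in the graph encoded by `r`. -/
def p4Count (r idx : List ℕ) : ℕ :=
  (List.sublistsLen 4 idx).countP (isP4 r)

/-- Whether some induced `P₄` of the graph encoded by `r` consists of all of `tail` and vertices of
`idx`. -/
def hits (r idx tail : List ℕ) : Bool :=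
  (List.sublistsLen (4 - tail.length) idx).any fun q => isP4 r (q ++ tail)

variable {V : Type*} {G : SimpleGraph V}

/-- The adjacency matrix of a graph on four vertices with the given six adjacencies. -/
def mat (ab ac ad bc bd cd : Bool) : Fin 4 → Fin 4 → Bool :=
  ![![false, ab, ac, ad], ![ab, false, bc, bd], ![ac, bc, false, cd], ![ad, bd, cd, false]]

/-- `isP4Bool` is correct: checked over all `2 ^ 6` graphs and all `4!` relabellings. -/
theorem isP4Bool_eq : ∀ ab ac ad bc bd cd : Bool, isP4Bool ab ac ad bc bd cd = true ↔
    ∃ σ : Equiv.Perm (Fin 4), ∀ i j, mat ab ac ad bc bd cd i j = true ↔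
      (SimpleGraph.pathGraph 4).Adj (σ i) (σ j) := by
  simp only [SimpleGraph.pathGraph_adj]
  decide +kernel

theorem isP4Bool_iff [DecidableEq V] {a b c d : V} (hab : a ≠ b) (hac : a ≠ c) (had : a ≠ d)
    (hbc : b ≠ c) (hbd : b ≠ d) (hcd : c ≠ d) {ab ac ad bc bd cd : Bool}
    (h1 : ab = true ↔ G.Adj a b) (h2 : ac = true ↔ G.Adj a c) (h3 : ad = true ↔ G.Adj a d)
    (h4 : bc = true ↔ G.Adj b c) (h5 : bd = true ↔ G.Adj b d) (h6 : cd = true ↔ G.Adj c d) :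
    isP4Bool ab ac ad bc bd cd = true ↔ InducesP4 G {a, b, c, d} := by
  let f : Fin 4 → (({a, b, c, d} : Finset V) : Set V) :=
    ![⟨a, by simp⟩, ⟨b, by simp⟩, ⟨c, by simp⟩, ⟨d, by simp⟩]
  have hf : Function.Bijective f := by
    constructor
    · intro i j hij
      fin_cases i <;> fin_cases j <;> simp_all [f]
    · rintro ⟨w, hw⟩
      simp only [Finset.coe_insert, Finset.coe_singleton, Set.mem_insert_iff,
        Set.mem_singleton_iff] at hw
      rcases hw with rfl | rfl | rfl | rfl
      exacts [⟨0, rfl⟩, ⟨1, rfl⟩, ⟨2, rfl⟩, ⟨3, rfl⟩]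
  have hadj : ∀ i j, mat ab ac ad bc bd cd i j = true ↔
      (G.induce (({a, b, c, d} : Finset V) : Set V)).Adj (f i) (f j) := by
    have s1 := G.adj_comm a b
    have s2 := G.adj_comm a c
    have s3 := G.adj_comm a d
    have s4 := G.adj_comm b c
    have s5 := G.adj_comm b d
    have s6 := G.adj_comm c d
    intro i j
    fin_cases i <;> fin_cases j <;> simp [mat, f, *]
  rw [isP4Bool_eq]
  let e := Equiv.ofBijective f hf
  constructor
  · rintro ⟨σ, hσ⟩
    refine ⟨⟨e.symm.trans σ, ?_⟩⟩
    intro u v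
    obtain ⟨i, rfl⟩ := e.surjective u
    obtain ⟨j, rfl⟩ := e.surjective v
    simpa [e] using (hσ i j).symm.trans (hadj i j)
  · rintro ⟨φ⟩
    refine ⟨e.trans φ.toEquiv, fun i j => (hadj i j).trans ?_⟩
    exact (φ.map_adj_iff (v := f i) (w := f j)).symm

theorem exists_path [DecidableEq V] {W : Finset V} (h : InducesP4 G W) :
    ∃ a b c d, W = {a, b, c, d} ∧ G.Adj a b ∧ G.Adj b c ∧ G.Adj c d ∧
      ¬ G.Adj a c ∧ ¬ G.Adj a d ∧ ¬ G.Adj b d := by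
  obtain ⟨e⟩ := h
  have key : ∀ i j : Fin 4, G.Adj (e.symm i : V) (e.symm j : V) ↔
      (SimpleGraph.pathGraph 4).Adj i j := fun i j => by
    rw [← e.symm.map_adj_iff]; rfl
  refine ⟨e.symm 0, e.symm 1, e.symm 2, e.symm 3, ?_, ?_⟩
  · ext w
    simp only [Finset.mem_insert, Finset.mem_singleton]
    constructor
    · intro hw
      have h : ((e.symm (e ⟨w, hw⟩) : (W : Set V)) : V) = w := by simp
      generalize e ⟨w, hw⟩ = i at h
      fin_cases i <;> simp_all
    · rintro (h | h | h | h) <;> rw [h] <;> exact Subtype.coe_prop (e.symm _)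
  · simp only [key, SimpleGraph.pathGraph_adj]
    decide

/-- The vertices `vs 0, …, vs (r.length - 1)` of `G` are distinct and induce the graph encoded by `r`;
the later values of `vs` are irrelevant. -/
structure Rep (G : SimpleGraph V) (vs : ℕ → V) (r : List ℕ) : Prop where
  inj : ∀ i j, i < j → j < r.length → vs i ≠ vs j
  adj : ∀ i j, i < j → j < r.length → (bit r i j = true ↔ G.Adj (vs i) (vs j))

theorem Rep.eq {vs : ℕ → V} {r : List ℕ} (h : Rep G vs r) {i j : ℕ} (hi : i < r.length) (hj : j < r.length)
    (he : vs i = vs j) : i = j := by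
  rcases lt_trichotomy i j with hij | hij | hij
  · exact absurd he (h.inj i j hij hj)
  · exact hij
  · exact absurd he.symm (h.inj j i hij hi)

/-- The set of vertices with indices in `idx`. -/
def toSet [DecidableEq V] (vs : ℕ → V) (idx : List ℕ) : Finset V := idx.toFinset.image vs

section
variable [DecidableEq V] {vs : ℕ → V} {r : List ℕ}

theorem mem_toSet {idx : List ℕ} {v : V} : v ∈ toSet vs idx ↔ ∃ i ∈ idx, vs i = v := by
  simp [toSet]

theorem toSet_subset {idx idx' : List ℕ} (h : idx ⊆ idx') : toSet vs idx ⊆ toSet vs idx' := by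
  intro v hv
  obtain ⟨i, hi, rfl⟩ := mem_toSet.1 hv
  exact mem_toSet.2 ⟨i, h hi, rfl⟩

theorem Rep.card_toSet (h : Rep G vs r) {idx : List ℕ} (hp : idx.Pairwise (· < ·))
    (hl : ∀ i ∈ idx, i < r.length) : (toSet vs idx).card = idx.length := by
  rw [toSet, Finset.card_image_of_injOn, List.toFinset_card_of_nodup (hp.imp ne_of_lt)]
  intro i hi j hj he
  exact h.eq (hl i (by simpa using hi)) (hl j (by simpa using hj)) he

theorem Rep.toSet_inj (h : Rep G vs r) {p q : List ℕ} (hp : p.Pairwise (· < ·))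
    (hpl : ∀ i ∈ p, i < r.length) (hq : q.Pairwise (· < ·)) (hql : ∀ i ∈ q, i < r.length)
    (he : toSet vs p = toSet vs q) : p = q := by
  have aux : ∀ p q : List ℕ, (∀ i ∈ p, i < r.length) → (∀ i ∈ q, i < r.length) →
      toSet vs p = toSet vs q → ∀ i ∈ p, i ∈ q := by
    intro p q hpl hql he i hi
    have : vs i ∈ toSet vs q := he ▸ mem_toSet.2 ⟨i, hi, rfl⟩
    obtain ⟨j, hj, hji⟩ := mem_toSet.1 this
    rwa [← h.eq (hql j hj) (hpl i hi) hji]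
  refine List.Perm.eq_of_pairwise (le := (· < ·)) (fun a b _ _ h1 h2 => absurd h1 (lt_asymm h2))
    hp hq ?_
  rw [List.perm_ext_iff_of_nodup (hp.imp ne_of_lt) (hq.imp ne_of_lt)]
  exact fun i => ⟨aux p q hpl hql he i, aux q p hql hpl he.symm i⟩

theorem Rep.isP4_iff (h : Rep G vs r) {q : List ℕ} (hp : q.Pairwise (· < ·))
    (hl : ∀ i ∈ q, i < r.length) (h4 : q.length = 4) :
    isP4 r q = true ↔ InducesP4 G (toSet vs q) := by
  match q, h4 with
  | [i, j, k, l], _ =>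
    simp only [List.pairwise_cons, List.mem_cons, List.not_mem_nil, or_false, forall_eq_or_imp,
      forall_eq, IsEmpty.forall_iff, implies_true, List.Pairwise.nil, and_true] at hp hl
    obtain ⟨⟨hij, hik, hil⟩, ⟨hjk, hjl⟩, hkl⟩ := hp
    obtain ⟨-, hj, hk, hl⟩ := hl
    have : toSet vs [i, j, k, l] = {vs i, vs j, vs k, vs l} := by
      ext; simp [toSet]
    rw [this]
    exact isP4Bool_iff (h.inj _ _ hij hj) (h.inj _ _ hik hk) (h.inj _ _ hil hl)
      (h.inj _ _ hjk hk) (h.inj _ _ hjl hl) (h.inj _ _ hkl hl)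
      (h.adj _ _ hij hj) (h.adj _ _ hik hk) (h.adj _ _ hil hl)
      (h.adj _ _ hjk hk) (h.adj _ _ hjl hl) (h.adj _ _ hkl hl)

theorem Rep.hits_iff (h : Rep G vs r) {idx tail : List ℕ}
    (hp : (idx ++ tail).Pairwise (· < ·)) (hl : ∀ i ∈ idx ++ tail, i < r.length)
    (ht : tail.length ≤ 4) : hits r idx tail = true ↔
      ∃ W ⊆ toSet vs (idx ++ tail), toSet vs tail ⊆ W ∧ W.card = 4 ∧ InducesP4 G W := by
  have sub : ∀ q ∈ List.sublistsLen (4 - tail.length) idx,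
      (q ++ tail).Pairwise (· < ·) ∧ (∀ i ∈ q ++ tail, i < r.length) ∧ (q ++ tail).length = 4 ∧
      q ++ tail ⊆ idx ++ tail := by
    intro q hq
    rw [List.mem_sublistsLen] at hq
    have hs : (q ++ tail).Sublist (idx ++ tail) := hq.1.append_right _
    refine ⟨hp.sublist hs, fun i hi => hl i (hs.subset hi), ?_, hs.subset⟩
    rw [List.length_append]; omega
  simp only [hits, List.any_eq_true]
  constructor
  · rintro ⟨q, hq, hP⟩
    obtain ⟨s1, s2, s3, s4⟩ := sub q hq
    refine ⟨toSet vs (q ++ tail), toSet_subset s4, toSet_subset (by simp), ?_,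
      (h.isP4_iff s1 s2 s3).1 hP⟩
    rw [h.card_toSet s1 s2, s3]
  · rintro ⟨W, hW, htW, hc, hP⟩
    -- `W` consists of `tail` and of the vertices with indices in `q`.
    let q := idx.filter (fun i => vs i ∈ W)
    have hq : q.Sublist idx := List.filter_sublist
    have hs : (q ++ tail).Sublist (idx ++ tail) := hq.append_right _
    have hset : toSet vs (q ++ tail) = W := by
      ext v
      rw [mem_toSet]
      constructor
      · rintro ⟨i, hi, rfl⟩
        rcases List.mem_append.1 hi with hi | hi
        · simpa using (List.mem_filter.1 hi).2
        · exact htW (mem_toSet.2 ⟨i, hi, rfl⟩)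
      · intro hv
        obtain ⟨i, hi, rfl⟩ := mem_toSet.1 (hW hv)
        refine ⟨i, ?_, rfl⟩
        rcases List.mem_append.1 hi with hi | hi
        · exact List.mem_append_left _ (List.mem_filter.2 ⟨hi, by simpa using hv⟩)
        · exact List.mem_append_right _ hi
    have hlen : (q ++ tail).length = 4 := by
      rw [← h.card_toSet (hp.sublist hs) (fun i hi => hl i (hs.subset hi)), hset, hc]
    refine ⟨q, List.mem_sublistsLen.2 ⟨hq, ?_⟩, ?_⟩
    · rw [List.length_append] at hlen; omega
    · rw [h.isP4_iff (hp.sublist hs) (fun i hi => hl i (hs.subset hi)) hlen, hset]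
      exact hP

theorem Rep.p4Count_le (h : Rep G vs r) {idx : List ℕ}
    (hp : idx.Pairwise (· < ·)) (hl : ∀ i ∈ idx, i < r.length) {s : Finset V}
    (hs : toSet vs idx ⊆ s) : (p4Count r idx : ℕ∞) ≤
      {W : Finset V | W ⊆ s ∧ W.card = 4 ∧ InducesP4 G W}.encard := by
  let L := (List.sublistsLen 4 idx).filter (isP4 r)
  have hL : ∀ q ∈ L, q.Sublist idx ∧ q.length = 4 ∧ isP4 r q = true := by
    intro q hq
    rw [List.mem_filter, List.mem_sublistsLen] at hq
    exact ⟨hq.1.1, hq.1.2, hq.2⟩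
  have hnd : (L.map (toSet vs)).Nodup := by
    refine List.Nodup.map_on ?_ ((List.nodup_sublistsLen 4 (hp.imp ne_of_lt)).filter _)
    intro p hp' q hq' he
    have h1 := (hL p hp').1
    have h2 := (hL q hq').1
    exact h.toSet_inj (hp.sublist h1) (fun i hi => hl i (h1.subset hi))
      (hp.sublist h2) (fun i hi => hl i (h2.subset hi)) he
  have hcount : p4Count r idx = (L.map (toSet vs)).toFinset.card := by
    rw [List.toFinset_card_of_nodup hnd, List.length_map, p4Count, List.countP_eq_length_filter]
  rw [hcount, ← Set.encard_coe_eq_coe_finsetCard]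
  refine Set.encard_le_encard ?_
  intro W hW
  simp only [List.coe_toFinset, Set.mem_ofPred_eq, List.mem_map] at hW
  obtain ⟨q, hq, rfl⟩ := hW
  obtain ⟨h1, h2, h3⟩ := hL q hq
  have a1 := hp.sublist h1
  have a2 := fun i hi => hl i (h1.subset hi)
  exact ⟨(toSet_subset h1.subset).trans hs, by rw [h.card_toSet a1 a2, h2],
    (h.isP4_iff a1 a2 h2).1 h3⟩

end

/-! ### Completing an encoding by one or two vertices -/

/-- `List.filter` (in reversed order) in continuation-passing style, which forces the kernel to compute
the filtered list once, before it is used. -/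
def filterK (p : ℕ → Bool) : List ℕ → List ℕ → (List ℕ → Bool) → Bool
  | [], acc, k => k acc
  | a :: l, acc, k => bif p a then filterK p l (a :: acc) k else filterK p l acc k

/-- Given a graph `r` on `m` vertices, consider all ways of adding two vertices `m` and `m + 1` such
that neither of them alone completes a `P₄` with old vertices, where the bitmask of neighbours of
each among the old vertices is taken from `cands`. The test asserts `concl` for the two new rows whenever
some `P₄` contains both new vertices. The rows of the second vertex are `y` and `y + 2 ^ m`,
according to the adjacency of the new vertices. -/
def allPairs (r : List ℕ) (m : ℕ) (cands : List ℕ) (concl : ℕ → ℕ → Bool) : Bool :=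
  filterK (fun x => !hits (r ++ [x]) (List.range m) [m]) cands [] fun xs =>
    xs.all fun x => xs.all fun y => [y, y + 2 ^ m].all fun y' =>
      !hits (r ++ [x, y']) (List.range m) [m, m + 1] || concl x y'

theorem bit_eq (r : List ℕ) (i j : ℕ) : bit r i j = (nth r j).testBit i := by
  rw [Bool.eq_iff_iff, Nat.testBit_eq_decide_div_mod_eq, decide_eq_true_iff]
  change Nat.beq ((nth r j) >>> i &&& 1) 1 = true ↔ _
  rw [Nat.beq_eq, Nat.and_one_is_mod, Nat.shiftRight_eq_div_pow]

theorem nth_append_left {r r' : List ℕ} : ∀ {j : ℕ}, j < r.length → nth (r ++ r') j = nth r j := by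
  induction r with
  | nil => intro j h; simp at h
  | cons a l ih =>
    intro j h
    cases j with
    | zero => rfl
    | succ j => exact ih (by simpa using h)

theorem nth_append_right {r r' : List ℕ} (j : ℕ) : nth (r ++ r') (r.length + j) = nth r' j := by
  induction r with
  | nil => simp
  | cons a l ih =>
    rw [List.length_cons, Nat.add_right_comm]
    exact ih

theorem filterK_eq (p : ℕ → Bool) (l acc : List ℕ) (k : List ℕ → Bool) :
    filterK p l acc k = k ((l.filter p).reverse ++ acc) := by
  induction l generalizing acc with
  | nil => rfl
  | cons a l ih =>
    rw [filterK, ih, ih]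
    cases h : p a <;> simp [h]

section
variable {vs : ℕ → V} {r : List ℕ}

theorem Rep.of_append {r' : List ℕ} (h : Rep G vs (r ++ r')) : Rep G vs r := by
  have hlen : r.length ≤ (r ++ r').length := by simp
  refine ⟨fun i j hij hj => h.inj i j hij (hj.trans_le hlen), fun i j hij hj => ?_⟩
  rw [← h.adj i j hij (hj.trans_le hlen), bit, bit, nth_append_left hj]

theorem Rep.congr {vs' : ℕ → V} (h : Rep G vs r) (he : ∀ i < r.length, vs' i = vs i) :
    Rep G vs' r := by
  refine ⟨fun i j hij hj => ?_, fun i j hij hj => ?_⟩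
  · rw [he i (hij.trans hj), he j hj]; exact h.inj i j hij hj
  · rw [he i (hij.trans hj), he j hj]; exact h.adj i j hij hj

theorem Rep.snoc_iff {x : ℕ} : Rep G vs (r ++ [x]) ↔ Rep G vs r ∧
    (∀ i < r.length, vs i ≠ vs r.length) ∧
    ∀ i < r.length, (x.testBit i = true ↔ G.Adj (vs i) (vs r.length)) := by
  have hn : nth (r ++ [x]) r.length = x := by simpa [nth] using nth_append_right (r := r) (r' := [x]) 0
  constructor
  · intro h
    refine ⟨h.of_append, fun i hi => h.inj i _ hi (by simp), fun i hi => ?_⟩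
    rw [← h.adj i _ hi (by simp), bit_eq, hn]
  · rintro ⟨h, h1, h2⟩
    refine ⟨fun i j hij hj => ?_, fun i j hij hj => ?_⟩
    · rcases Nat.lt_succ_iff_lt_or_eq.1 (by simpa using hj) with hj | rfl
      · exact h.inj i j hij hj
      · exact h1 i hij
    · rcases Nat.lt_succ_iff_lt_or_eq.1 (by simpa using hj) with hj | rfl
      · rw [← h.adj i j hij hj, bit, bit, nth_append_left hj]
      · rw [← h2 i hij, bit_eq, hn]

theorem Rep.exists_snoc (h : Rep G vs r) (hne : ∀ i < r.length, vs i ≠ vs r.length) :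
    ∃ x < 2 ^ r.length, Rep G vs (r ++ [x]) := by
  classical
  refine ⟨Nat.ofBits fun i : Fin r.length => decide (G.Adj (vs i) (vs r.length)),
    Nat.ofBits_lt_two_pow _, Rep.snoc_iff.2 ⟨h, hne, fun i hi => ?_⟩⟩
  rw [Nat.testBit_ofBits_lt _ _ hi, decide_eq_true_iff]

theorem Rep.path (h01 : G.Adj (vs 0) (vs 1)) (h12 : G.Adj (vs 1) (vs 2)) (h23 : G.Adj (vs 2) (vs 3))
    (h02 : ¬ G.Adj (vs 0) (vs 2)) (h03 : ¬ G.Adj (vs 0) (vs 3)) (h13 : ¬ G.Adj (vs 1) (vs 3)) :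
    Rep G vs [0, 1, 2, 4] := by
  have n02 : vs 0 ≠ vs 2 := fun h => h03 (h ▸ h23)
  have n03 : vs 0 ≠ vs 3 := fun h => h13 (h ▸ h01.symm)
  have n13 : vs 1 ≠ vs 3 := fun h => h03 (h ▸ h01)
  constructor
  · intro i j hij hj
    simp only [List.length_cons, List.length_nil] at hj
    interval_cases j <;> interval_cases i <;> first | assumption | exact G.ne_of_adj ‹_›
  · intro i j hij hj
    simp only [List.length_cons, List.length_nil] at hj
    interval_cases j <;> interval_cases i <;> simp [bit_eq, nth, Nat.testBit, *]

/-- Two vertices `vs m` and `vs (m + 1)`, each encoded relative to the first `m` vertices, can be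
encoded together: only the bit of their mutual adjacency is added. -/
theorem Rep.pair {x y m : ℕ} (hm : r.length = m) (hx : Rep G vs (r ++ [x]))
    (hy : Rep G (fun i => if i = m then vs (m + 1) else vs i) (r ++ [y])) (hy2 : y < 2 ^ m)
    (hne : vs m ≠ vs (m + 1)) : ∃ y' ∈ [y, y + 2 ^ m], Rep G vs (r ++ [x, y']) := by
  subst hm
  rw [Rep.snoc_iff] at hy
  obtain ⟨-, h1, h2⟩ := hy
  have h1' : ∀ i < r.length, vs i ≠ vs (r.length + 1) := fun i hi => by
    simpa [hi.ne] using h1 i hi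
  have h2' : ∀ i < r.length, (y.testBit i = true ↔ G.Adj (vs i) (vs (r.length + 1))) :=
    fun i hi => by simpa [hi.ne] using h2 i hi
  have hlt : ∀ i < (r ++ [x]).length, i < r.length ∨ i = r.length := fun i hi => by
    simp at hi; omega
  have key : ∀ y', (∀ i < r.length, y'.testBit i = y.testBit i) →
      (y'.testBit r.length = true ↔ G.Adj (vs r.length) (vs (r.length + 1))) →
      Rep G vs (r ++ [x, y']) := by
    intro y' e1 e2
    rw [show r ++ [x, y'] = (r ++ [x]) ++ [y'] by simp, Rep.snoc_iff]
    simp only [List.length_append, List.length_singleton]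
    refine ⟨hx, fun i hi => ?_, fun i hi => ?_⟩
    · rcases Nat.lt_succ_iff_lt_or_eq.1 hi with hi | rfl
      exacts [h1' i hi, hne]
    · rcases Nat.lt_succ_iff_lt_or_eq.1 hi with hi | rfl
      · rw [e1 i hi, h2' i hi]
      · exact e2
  by_cases hadj : G.Adj (vs r.length) (vs (r.length + 1))
  · refine ⟨y + 2 ^ r.length, by simp, key _ (fun i hi => ?_) ?_⟩
    · rw [Nat.add_comm, Nat.testBit_two_pow_add_gt hi]
    · rw [Nat.add_comm, Nat.testBit_two_pow_add_eq, Nat.testBit_lt_two_pow hy2]; simpa using hadj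
  · refine ⟨y, by simp, key _ (fun i hi => rfl) ?_⟩
    rw [Nat.testBit_lt_two_pow hy2]; simpa using hadj

/-- No induced `P₄` contained in `H ∪ {x}` passes through `x`. -/
def NoExt [DecidableEq V] (G : SimpleGraph V) (H : Finset V) (x : V) : Prop :=
  ∀ W ⊆ insert x H, x ∈ W → W.card = 4 → ¬ InducesP4 G W

variable [DecidableEq V]

theorem toSet_append (idx tail : List ℕ) :
    toSet vs (idx ++ tail) = toSet vs tail ∪ toSet vs idx := by
  ext; simp [toSet, or_and_right, exists_or, or_comm]

theorem pairwise_append_aux {m n : ℕ} {idx : List ℕ} (hp : idx.Pairwise (· < ·))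
    (hl : ∀ i ∈ idx, i < m) (hmn : m ≤ n) {tail : List ℕ} (ht : tail.Pairwise (· < ·))
    (htl : ∀ i ∈ tail, m ≤ i ∧ i < n) :
    (idx ++ tail).Pairwise (· < ·) ∧ ∀ i ∈ idx ++ tail, i < n := by
  constructor
  · rw [List.pairwise_append]
    exact ⟨hp, ht, fun a ha b hb => (hl a ha).trans_le (htl b hb).1⟩
  · intro i hi
    rcases List.mem_append.1 hi with hi | hi
    exacts [(hl i hi).trans_le hmn, (htl i hi).2]

theorem Rep.hits_single (h : Rep G vs r) {n : ℕ} (hn : n < r.length) {idx : List ℕ}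
    (hp : idx.Pairwise (· < ·)) (hl : ∀ i ∈ idx, i < n) :
    hits r idx [n] = true ↔ ¬ NoExt G (toSet vs idx) (vs n) := by
  obtain ⟨h1, h2⟩ := pairwise_append_aux hp hl hn.le (tail := [n]) (by simp) (by simpa using hn)
  rw [h.hits_iff h1 h2 (by simp), toSet_append]
  have : toSet vs [n] = {vs n} := by ext; simp [toSet]
  simp only [this, NoExt, Finset.singleton_subset_iff, ← Finset.insert_eq]
  push Not
  rfl

theorem Rep.not_hits_single (h : Rep G vs r) {n : ℕ} (hn : n < r.length) {idx : List ℕ}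
    (hp : idx.Pairwise (· < ·)) (hl : ∀ i ∈ idx, i < n) :
    hits r idx [n] = false ↔ NoExt G (toSet vs idx) (vs n) := by
  rw [← Bool.not_eq_true, h.hits_single hn hp hl, not_not]

theorem range_pairwise (m : ℕ) : (List.range m).Pairwise (· < ·) := List.pairwise_lt_range

/-- If the test `allPairs` succeeds, its conclusion holds for any two vertices outside the set `H` of
the first `m` vertices that do not extend `H` one at a time but lie in a common `P₄` of `H`
together with them. The set `cands` has to contain every row that can occur. -/
theorem allPairs_sound {m : ℕ} {cands : List ℕ} {concl : ℕ → ℕ → Bool}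
    (h : Rep G vs r) (hm : r.length = m)
    (hx : ∀ i < m, vs i ≠ vs m) (hy : ∀ i < m, vs i ≠ vs (m + 1)) (hxy : vs m ≠ vs (m + 1))
    (nx : NoExt G (toSet vs (List.range m)) (vs m))
    (ny : NoExt G (toSet vs (List.range m)) (vs (m + 1)))
    (hc : ∀ vs' x, Rep G vs' (r ++ [x]) → (∀ i < m, vs' i = vs i) →
      NoExt G (toSet vs (List.range m)) (vs' m) → x < 2 ^ m → x ∈ cands)
    {W : Finset V} (hW : W ⊆ insert (vs m) (insert (vs (m + 1)) (toSet vs (List.range m))))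
    (hxW : vs m ∈ W) (hyW : vs (m + 1) ∈ W) (hcard : W.card = 4) (hP : InducesP4 G W)
    (hall : allPairs r m cands concl = true) :
    ∃ x y, Rep G vs (r ++ [x, y]) ∧ concl x y = true := by
  subst hm
  set m := r.length with hm
  have hmr : ∀ i ∈ List.range m, i < m := fun i hi => List.mem_range.1 hi
  have row : ∀ vs' : ℕ → V, (∀ i < m, vs' i = vs i) → (∀ i < m, vs' i ≠ vs' m) →
      NoExt G (toSet vs (List.range m)) (vs' m) →
      ∃ x < 2 ^ m, Rep G vs' (r ++ [x]) ∧
        x ∈ cands.filter (fun x => !hits (r ++ [x]) (List.range m) [m]) := by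
    intro vs' he hne hno
    obtain ⟨x, hx2, hxr⟩ := (h.congr he).exists_snoc hne
    refine ⟨x, hx2, hxr, List.mem_filter.2 ⟨hc vs' x hxr he hno hx2, ?_⟩⟩
    rw [Bool.not_eq_true', hxr.not_hits_single (by simp [hm]) (range_pairwise m) hmr]
    have hset : toSet vs' (List.range m) = toSet vs (List.range m) := by
      ext v
      simp only [mem_toSet]
      exact exists_congr fun i => and_congr_right fun hi => by rw [he i (hmr i hi)]
    rwa [hset]
  obtain ⟨x, -, hxr, hxf⟩ := row vs (fun _ _ => rfl) hx nx
  obtain ⟨y, hy2, hyr, hyf⟩ := row (fun i => if i = m then vs (m + 1) else vs i)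
    (fun i hi => by simp [hi.ne]) (fun i hi => by simpa [hi.ne] using hy i hi) (by simpa using ny)
  obtain ⟨y', hy', hrep⟩ := Rep.pair hm.symm hxr hyr hy2 hxy
  rw [allPairs, filterK_eq, List.append_nil] at hall
  simp only [List.all_eq_true, List.mem_reverse] at hall
  have := hall x hxf y hyf y' hy'
  have hhit : hits (r ++ [x, y']) (List.range m) [m, m + 1] = true := by
    obtain ⟨h1, h2⟩ := pairwise_append_aux (n := m + 2) (range_pairwise m) hmr (by simp)
      (tail := [m, m + 1]) (by simp) (by simp)
    have e : toSet vs [m, m + 1] = {vs m, vs (m + 1)} := by ext; simp [toSet]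
    rw [hrep.hits_iff h1 (by simpa [hm] using h2) (by simp), toSet_append, e]
    exact ⟨W, by simpa [Finset.insert_union] using hW, by
      simp [Finset.insert_subset_iff, hxW, hyW], hcard, hP⟩
  exact ⟨x, y', hrep, by simpa [hhit] using this⟩

/-- A vertex that forms no `P₄` with three vertices of a `P₄` sees none of its vertices, exactly the
two inner ones, or all of them. -/
theorem Rep.type_mem {x : ℕ} (h4 : Rep G vs [0, 1, 2, 4]) (h : Rep G vs (r ++ [x]))
    (hr : 4 ≤ r.length) (hno : NoExt G (toSet vs (List.range 4)) (vs r.length)) :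
    x % 2 ^ 4 ∈ [0, 6, 15] := by
  obtain ⟨-, h1, h2⟩ := Rep.snoc_iff.1 h
  have hQ : Rep G (fun i => if i = 4 then vs r.length else vs i) [0, 1, 2, 4] :=
    h4.congr fun i hi => by
      have : i ≠ 4 := by simp at hi; omega
      simp [this]
  obtain ⟨x', hx', hx'r⟩ := hQ.exists_snoc fun i hi => by
    simp only [List.length_cons, List.length_nil] at hi ⊢
    simpa [hi.ne] using h1 i (by omega)
  have hh : hits ([0, 1, 2, 4] ++ [x']) (List.range 4) [4] = false := by
    rw [hx'r.not_hits_single (by simp) (range_pairwise 4) (fun i hi => List.mem_range.1 hi)]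
    exact hno
  have he : x % 2 ^ 4 = x' := by
    refine Nat.eq_of_testBit_eq fun i => ?_
    rw [Nat.testBit_mod_two_pow]
    by_cases hi : i < 4
    · have := (Rep.snoc_iff.1 hx'r).2.2 i (by simpa using hi)
      simp only [List.length_cons, List.length_nil, hi.ne, if_false, if_true] at this
      rw [Bool.eq_iff_iff]
      simp only [hi, decide_true, Bool.true_and]
      rw [h2 i (by omega)]
      exact this.symm
    · rw [Nat.testBit_lt_two_pow (hx'.trans_le (Nat.pow_le_pow_right (by simp) (by simpa using hi)))]
      simp [hi]
  rw [he]
  have : ∀ x' < 16, hits ([0, 1, 2, 4] ++ [x']) (List.range 4) [4] = false → x' ∈ [0, 6, 15] := by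
    decide +kernel
  exact this x' hx' hh

theorem NoExt.mono {H H' : Finset V} {x : V} (h : NoExt G H x) (hs : H' ⊆ H) : NoExt G H' x :=
  fun W hW => h W (hW.trans (Finset.insert_subset_insert x hs))
end


/-! ### Finite verifications -/

/-- If `x, y, z` do not extend a `P₄` `Q` individually, but form a `P₄` together with one vertex of `Q`,
then `Q ∪ {x, y, z}` contains at least four `P₄`s. -/
def tripleCheck : Bool :=
  (List.range 16).all fun x => hits [0, 1, 2, 4, x] (List.range 4) [4] ||
  (List.range 32).all fun y => hits [0, 1, 2, 4, x, y] (List.range 4) [5] ||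
  (List.range 64).all fun z => hits [0, 1, 2, 4, x, y, z] (List.range 4) [6] ||
    !hits [0, 1, 2, 4, x, y, z] (List.range 4) [4, 5, 6] ||
    Nat.ble 4 (p4Count [0, 1, 2, 4, x, y, z] (List.range 7))

/-- If `v` extends the `P₄` `Q`, then a crossing pair over `Q ∪ {v}` gives at least four `P₄`s in a
`7`-set. The candidate rows are those that restrict to a possible row over `Q`. -/
def fiveSetCheck : Bool :=
  (List.range 16).all fun v => !hits [0, 1, 2, 4, v] (List.range 4) [4] ||
  allPairs [0, 1, 2, 4, v] 5 [0, 6, 15, 16, 22, 31] fun x y =>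
    Nat.ble 4 (p4Count [0, 1, 2, 4, v, x, y] (List.range 7))

/-- If `v` extends the `P₄` `Q`, `z` extends `Q ∪ {v}`, and these six vertices carry at most three
`P₄`s, then a crossing pair over them gives at least four `P₄`s, even when `z` is omitted. -/
def sixSetCheck : Bool :=
  (List.range 16).all fun v => !hits [0, 1, 2, 4, v] (List.range 4) [4] ||
  (List.range 32).all fun z => !hits [0, 1, 2, 4, v, z] (List.range 5) [5] ||
    !Nat.ble (p4Count [0, 1, 2, 4, v, z] (List.range 6)) 3 ||
  allPairs [0, 1, 2, 4, v, z] 6 [0, 6, 15, 16, 22, 31, 32, 38, 47, 48, 54, 63] fun x y =>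
    Nat.ble 4 (p4Count [0, 1, 2, 4, v, z, x, y] [0, 1, 2, 3, 4, 6, 7])

/-- The encoding of the headless spider with three legs, thick iff `t`, in the vertex order
`c₁, c₂, c₃, s₁, s₂, s₃`. -/
def spiderRows (t : Bool) : List ℕ := if t then [0, 1, 3, 6, 5, 3] else [0, 1, 3, 1, 2, 4]

/-- A vertex extending a headless spider with three legs already extends one of the three `P₄`s on two
legs. -/
def spiderNoExtCheck (t : Bool) : Bool :=
  (List.range 64).all fun x =>
    hits (spiderRows t ++ [x]) [0, 1, 3, 4] [6] ||
    hits (spiderRows t ++ [x]) [0, 2, 3, 5] [6] ||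
    hits (spiderRows t ++ [x]) [1, 2, 4, 5] [6] ||
    !hits (spiderRows t ++ [x]) (List.range 6) [6]

/-- A crossing pair over a headless spider with three legs either yields a `5`-set with two `P₄`s, or
consists of a new body vertex and a new leg. -/
def spiderGrowCheck (t : Bool) : Bool :=
  allPairs (spiderRows t) 6 (List.range 64) fun x y =>
    ((List.sublistsLen 5 (List.range 8)).any fun idx =>
      Nat.ble 2 (p4Count (spiderRows t ++ [x, y]) idx)) ||
    if t then (x == 63 && y == 7) || (x == 7 && y == 63)
    else (x == 7 && y == 64) || (x == 0 && y == 71)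

/-- A crossing pair over a `P₄` completes it to a headless spider with three legs: thin in the first
two cases, thick in the last two. -/
def spiderBaseCheck : Bool :=
  allPairs [0, 1, 2, 4] 4 [0, 6, 15] fun x y =>
    (x == 6 && y == 16) || (x == 0 && y == 22) || (x == 15 && y == 6) || (x == 6 && y == 15)

theorem tripleCheck_eq : tripleCheck = true := by decide +kernel

theorem fiveSetCheck_eq : fiveSetCheck = true := by decide +kernel

theorem sixSetCheck_eq : sixSetCheck = true := by decide +kernel

theorem spiderNoExtCheck_eq : ∀ t, spiderNoExtCheck t = true := by decide +kernel

theorem spiderGrowCheck_eq : ∀ t, spiderGrowCheck t = true := by decide +kernel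

theorem spiderBaseCheck_eq : spiderBaseCheck = true := by decide +kernel

/-! ### Crossing pairs -/

section
variable [DecidableEq V] {vs : ℕ → V} {r : List ℕ}

theorem p4Count_le_three [Fintype V] (h73 : SevenThreeGraph G) (hV : 7 ≤ Fintype.card V)
    (h : Rep G vs r) {idx : List ℕ} (hp : idx.Pairwise (· < ·)) (hl : ∀ i ∈ idx, i < r.length)
    (hlen : idx.length ≤ 7) : p4Count r idx ≤ 3 := by
  obtain ⟨s, hs, hcard⟩ := Finset.exists_superset_card_eq (s := toSet vs idx) (n := 7)
    (by rw [h.card_toSet hp hl]; exact hlen) hV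
  exact_mod_cast (h.p4Count_le hp hl hs).trans (h73 s hcard)

theorem p4Count_le_one (hsp : P4Sparse G) (h : Rep G vs r) {idx : List ℕ}
    (hp : idx.Pairwise (· < ·)) (hl : ∀ i ∈ idx, i < r.length)
    (hlen : idx.length = 5) : p4Count r idx ≤ 1 := by
  have := hsp (toSet vs idx) (by rw [h.card_toSet hp hl, hlen])
  exact_mod_cast (h.p4Count_le hp hl subset_rfl).trans (Set.encard_le_one_iff_subsingleton.2 this)

/-- If `H` is a proper nonempty union of induced `P₄`s that no outside vertex extends, then some `P₄`
has exactly two vertices outside `H`. -/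
theorem exists_crossing_pair [Fintype V] (hc : P4Connected G) (h73 : SevenThreeGraph G)
    (hV : 7 ≤ Fintype.card V) {H : Finset V} (hne : H.Nonempty) (hnu : ∃ x, x ∉ H)
    (hcov : ∀ h ∈ H, ∃ Q ⊆ H, h ∈ Q ∧ Q.card = 4 ∧ InducesP4 G Q)
    (hno : ∀ x ∉ H, NoExt G H x) :
    ∃ x y, x ∉ H ∧ y ∉ H ∧ x ≠ y ∧ ∃ W ⊆ insert x (insert y H), x ∈ W ∧ y ∈ W ∧
      W.card = 4 ∧ InducesP4 G W := by
  obtain ⟨W, hW4, hWP, ⟨h, hhW, hhH⟩, ⟨x, hxW, hxH⟩⟩ := hc (H : Set V) hne hnu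
  simp only [Finset.mem_coe, Set.mem_compl_iff] at hhW hhH hxW hxH
  have hsplit : (W ∩ H).card + (W \ H).card = 4 := by rw [Finset.card_inter_add_card_sdiff, hW4]
  have hpos : 0 < (W ∩ H).card := Finset.card_pos.2 ⟨h, by simp [hhW, hhH]⟩
  have hpos' : 0 < (W \ H).card := Finset.card_pos.2 ⟨x, by simp [hxW, hxH]⟩
  have hWH : ∀ w, w ∈ W → w ∈ W \ H ∨ w ∈ H := fun w hw => by
    by_cases hwH : w ∈ H <;> simp [hw, hwH]
  obtain h1 | h2 | h3 : (W \ H).card = 1 ∨ (W \ H).card = 2 ∨ (W \ H).card = 3 := by omega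
  · obtain ⟨x, hx⟩ := Finset.card_eq_one.1 h1
    have hxm : x ∈ W \ H := by simp [hx]
    rw [Finset.mem_sdiff] at hxm
    refine absurd hWP (hno x hxm.2 W (fun w hw => ?_) hxm.1 hW4)
    have := hWH w hw
    rw [hx] at this
    simpa using this
  · obtain ⟨x, y, hxy, hx⟩ := Finset.card_eq_two.1 h2
    have hxm : x ∈ W \ H := by simp [hx]
    have hym : y ∈ W \ H := by simp [hx]
    rw [Finset.mem_sdiff] at hxm hym
    refine ⟨x, y, hxm.2, hym.2, hxy, W, fun w hw => ?_, hxm.1, hym.1, hW4, hWP⟩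
    have := hWH w hw
    rw [hx] at this
    simpa [or_assoc] using this
  · exfalso
    obtain ⟨x, y, z, hxy, hxz, hyz, hx⟩ := Finset.card_eq_three.1 h3
    have hxm : x ∈ W \ H := by simp [hx]
    have hym : y ∈ W \ H := by simp [hx]
    have hzm : z ∈ W \ H := by simp [hx]
    rw [Finset.mem_sdiff] at hxm hym hzm
    have hWh : W ∩ H = {h} := by
      obtain ⟨a, ha⟩ := Finset.card_eq_one.1 (show (W ∩ H).card = 1 by omega)
      have : h ∈ W ∩ H := by simp [hhW, hhH]
      rw [ha] at this ⊢
      rw [Finset.mem_singleton.1 this]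
    obtain ⟨Q, hQH, hhQ, -, hQP⟩ := hcov h hhH
    obtain ⟨a, b, c, d, rfl, hab, hbc, hcd, hac, had, hbd⟩ := exists_path hQP
    have hmem : ∀ u, u ∉ H → u ≠ a ∧ u ≠ b ∧ u ≠ c ∧ u ≠ d := fun u hu =>
      ⟨fun e => hu (hQH (by simp [e])), fun e => hu (hQH (by simp [e])),
        fun e => hu (hQH (by simp [e])), fun e => hu (hQH (by simp [e]))⟩
    obtain ⟨x1, x2, x3, x4⟩ := hmem x hxm.2
    obtain ⟨y1, y2, y3, y4⟩ := hmem y hym.2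
    obtain ⟨z1, z2, z3, z4⟩ := hmem z hzm.2
    let vs : ℕ → V := fun i => [a, b, c, d, x, y, z].getD i a
    have r4 : Rep G vs [0, 1, 2, 4] := Rep.path hab hbc hcd hac had hbd
    obtain ⟨p, hp, r5⟩ := r4.exists_snoc (by
      intro i hi; simp only [List.length_cons, List.length_nil] at hi
      interval_cases i <;> simp [vs, Ne.symm, *])
    obtain ⟨q, hq, r6⟩ := r5.exists_snoc (by
      intro i hi; simp at hi
      interval_cases i <;> simp [vs, Ne.symm, *])
    obtain ⟨s, hs, r7⟩ := r6.exists_snoc (by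
      intro i hi; simp at hi
      interval_cases i <;> simp [vs, Ne.symm, *])
    simp only [List.cons_append, List.nil_append] at r5 r6 r7
    have hset : toSet vs (List.range 4) = {a, b, c, d} := by
      ext u; simp [mem_toSet, List.range_succ, vs, eq_comm]
    have hN : ∀ u, u ∉ H → NoExt G (toSet vs (List.range 4)) u := fun u hu =>
      (hno u hu).mono (hset ▸ hQH)
    have hr : ∀ n, 4 ≤ n → ∀ i ∈ List.range 4, i < n := fun n hn i hi =>
      (List.mem_range.1 hi).trans_le hn
    have hck := tripleCheck_eq
    simp only [tripleCheck, List.all_eq_true, Bool.or_eq_true, List.mem_range] at hck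
    obtain hck | hck := hck p (by simpa using hp)
    · exact (r5.hits_single (n := 4) (by simp) (range_pairwise 4) (hr 4 le_rfl)).1 hck (hN x hxm.2)
    obtain hck | hck := hck q (by simpa using hq)
    · exact (r6.hits_single (n := 5) (by simp) (range_pairwise 4) (hr 5 (by simp))).1 hck (hN y hym.2)
    obtain (hck | hck) | hck := hck s (by simpa using hs)
    · exact (r7.hits_single (n := 6) (by simp) (range_pairwise 4) (hr 6 (by simp))).1 hck (hN z hzm.2)
    · obtain ⟨e1, e2⟩ := pairwise_append_aux (n := 7) (range_pairwise 4) (hr 4 le_rfl) (by simp)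
        (tail := [4, 5, 6]) (by simp) (by simp)
      have : hits [0, 1, 2, 4, p, q, s] (List.range 4) [4, 5, 6] = true := by
        rw [r7.hits_iff e1 (by simpa using e2) (by simp)]
        refine ⟨W, fun w hw => ?_, fun w hw => ?_, hW4, hWP⟩
        · rw [toSet_append, hset, Finset.mem_union]
          rcases hWH w hw with hw' | hw'
          · left
            rw [hx] at hw'
            simpa [toSet, vs, eq_comm] using hw'
          · right
            have : w ∈ W ∩ H := Finset.mem_inter.2 ⟨hw, hw'⟩
            rw [hWh, Finset.mem_singleton] at this
            exact this ▸ hhQ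
        · have : w ∈ W \ H := by
            rw [hx]; simpa [toSet, vs, eq_comm] using hw
          exact (Finset.mem_sdiff.1 this).1
      simp [this] at hck
    · have h3 := p4Count_le_three h73 hV r7 (range_pairwise 7)
        (fun i hi => by simpa using hi) (by simp)
      have h4 := Nat.le_of_ble_eq_true hck
      omega
end

/-! ### Reduction to `P₄`-sparse graphs -/

section
variable [DecidableEq V] {vs : ℕ → V} {r : List ℕ}

theorem toSet_congr {vs' : ℕ → V} {idx : List ℕ} (h : ∀ i ∈ idx, vs' i = vs i) :
    toSet vs' idx = toSet vs idx := by
  ext v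
  simp only [mem_toSet]
  exact exists_congr fun i => and_congr_right fun hi => by rw [h i hi]

theorem type_cands {m : ℕ} (h4 : Rep G vs [0, 1, 2, 4]) (hm : r.length = m) (hm4 : 4 ≤ m)
    (vs' : ℕ → V) (x : ℕ) (hr : Rep G vs' (r ++ [x])) (he : ∀ i < m, vs' i = vs i)
    (hno : NoExt G (toSet vs (List.range m)) (vs' m)) : x % 2 ^ 4 ∈ [0, 6, 15] := by
  subst hm
  refine Rep.type_mem (h4.congr fun i hi => he i ((show i < 4 from hi).trans_le hm4)) hr hm4
    (hno.mono ?_)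
  rw [toSet_congr fun i hi => he i ((List.mem_range.1 hi).trans_le hm4)]
  exact toSet_subset (List.range_subset.2 hm4)

theorem exists_notMem_of_card_lt [Fintype V] {t : Finset V} (ht : t.card < Fintype.card V) :
    ∃ x, x ∉ t := by
  by_contra! hall
  rw [Finset.eq_univ_of_forall hall, Finset.card_univ] at ht
  exact lt_irrefl _ ht

/-- A `5`-set with a `P₄` and a vertex extending it is itself extended by some outside vertex. -/
theorem two_p4_exists_ext [Fintype V] (hc : P4Connected G) (h73 : SevenThreeGraph G)
    (hV : 7 ≤ Fintype.card V) {a b c d v : V} (hvQ : v ∉ ({a, b, c, d} : Finset V))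
    (hs : (insert v ({a, b, c, d} : Finset V)).card = 5)
    (hab : G.Adj a b) (hbc : G.Adj b c) (hcd : G.Adj c d)
    (hac : ¬ G.Adj a c) (had : ¬ G.Adj a d) (hbd : ¬ G.Adj b d)
    (hvE : ¬ NoExt G {a, b, c, d} v)
    (hcov : ∀ h ∈ insert v ({a, b, c, d} : Finset V),
      ∃ Q' ⊆ insert v {a, b, c, d}, h ∈ Q' ∧ Q'.card = 4 ∧ InducesP4 G Q')
    (hcase : ∀ x ∉ insert v ({a, b, c, d} : Finset V), NoExt G (insert v {a, b, c, d}) x) :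
    False := by
  have hr : ∀ n m, n ≤ m → ∀ i ∈ List.range n, i < m := fun n m hn i hi =>
    (List.mem_range.1 hi).trans_le hn
  simp only [Finset.mem_insert, Finset.mem_singleton, not_or] at hvQ
  obtain ⟨v1, v2, v3, v4⟩ := hvQ
  obtain ⟨x, y, hx, hy, hxy, W, hW, hxW, hyW, hW4, hWP⟩ :=
    exists_crossing_pair hc h73 hV ⟨v, by simp⟩ (exists_notMem_of_card_lt (by omega)) hcov hcase
  have nx := hcase x hx
  have ny := hcase y hy
  let vs : ℕ → V := fun i => [a, b, c, d, v, x, y].getD i a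
  have hset4 : toSet vs (List.range 4) = {a, b, c, d} := by
    ext u; simp [mem_toSet, List.range_succ, vs, eq_comm]
  have hset : toSet vs (List.range 5) = insert v {a, b, c, d} := by
    rw [show List.range 5 = List.range 4 ++ [4] from rfl, toSet_append, hset4, Finset.insert_eq]
    rfl
  rw [← hset] at nx ny hW
  simp only [Finset.mem_insert, Finset.mem_singleton, not_or] at hx hy
  have r4 : Rep G vs [0, 1, 2, 4] := Rep.path hab hbc hcd hac had hbd
  obtain ⟨p, hp, r5⟩ := r4.exists_snoc (by
    intro i hi; simp only [List.length_cons, List.length_nil] at hi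
    interval_cases i <;> simp [vs] <;> grind)
  simp only [List.cons_append, List.nil_append] at r5
  have hhit : hits [0, 1, 2, 4, p] (List.range 4) [4] = true := by
    rw [Rep.hits_single r5 (n := 4) (by simp) (range_pairwise 4) (hr 4 4 le_rfl), hset4]
    exact hvE
  have hck := fiveSetCheck_eq
  simp only [fiveSetCheck, List.all_eq_true, Bool.or_eq_true, List.mem_range] at hck
  have hck := hck p (by simpa using hp)
  simp only [hhit, Bool.not_true, Bool.false_eq_true, false_or] at hck
  obtain ⟨x', y', r7, hble⟩ := allPairs_sound (m := 5) r5 rfl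
    (by intro i hi; interval_cases i <;> simp [vs] <;> grind)
    (by intro i hi; interval_cases i <;> simp [vs] <;> grind)
    hxy nx ny
    (fun vs' x' h1 h2 h3 h4 => (by decide : ∀ x < 2 ^ 5, x % 2 ^ 4 ∈ [0, 6, 15] →
      x ∈ [0, 6, 15, 16, 22, 31]) x' h4 (type_cands r4 rfl (by simp) vs' x' h1 h2 h3))
    hW hxW hyW hW4 hWP hck
  have h3 := p4Count_le_three h73 hV r7 (range_pairwise 7) (hr 7 7 le_rfl) (by simp)
  have h4 := Nat.le_of_ble_eq_true hble
  exact absurd (h4.trans h3) (by decide)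

/-- Two `P₄`s in a `5`-set `s` and a `P₄` through `z` in `s ∪ {z}` leave no room for a further `P₄`
through another vertex: it would be the fourth one in a `7`-set. -/
theorem noExt_of_three_p4 (h73 : SevenThreeGraph G) {s Q R U : Finset V} {z : V} (hs : s.card = 5)
    (hz : z ∉ s) (hQs : Q ⊆ s) (hQ4 : Q.card = 4) (hQP : InducesP4 G Q)
    (hRs : R ⊆ s) (hR4 : R.card = 4) (hRP : InducesP4 G R) (hQR : Q ≠ R)
    (hUs : U ⊆ insert z s) (hzU : z ∈ U) (hU4 : U.card = 4) (hUP : InducesP4 G U) :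
    ∀ x ∉ insert z s, NoExt G (insert z s) x := by
  intro x hx W hW hxW hW4 hWP
  have h3 := h73 (insert x (insert z s))
    (by rw [Finset.card_insert_of_notMem hx, Finset.card_insert_of_notMem hz, hs])
  have hne : ∀ T, T ⊆ insert z s → T ≠ W := by
    rintro T hT rfl; exact hx (hT hxW)
  have hne' : ∀ T, T ⊆ s → T ≠ U := by
    rintro T hT rfl; exact hz (hT hzU)
  have h4 : (({Q, R, U, W} : Finset (Finset V)) :
      Set (Finset V)).encard = 4 := by
    rw [Set.encard_coe_eq_coe_finsetCard]
    rw [Finset.card_insert_of_notMem, Finset.card_insert_of_notMem,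
      Finset.card_pair (hne U hUs)]
    · rfl
    · simp [hne' R hRs, hne R (hRs.trans (Finset.subset_insert _ _))]
    · simp only [Finset.mem_insert, Finset.mem_singleton, not_or]
      exact ⟨hQR, hne' _ hQs, hne _ (hQs.trans (Finset.subset_insert _ _))⟩
  have hle := (Set.encard_le_encard (s := (({Q, R, U, W} :
    Finset (Finset V)) : Set (Finset V))) (by
      intro T hT
      simp only [Finset.coe_insert, Finset.coe_singleton, Set.mem_insert_iff,
        Set.mem_singleton_iff] at hT
      have i1 := Finset.subset_insert x (insert z s)
      have i2 := Finset.subset_insert z s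
      rcases hT with rfl | rfl | rfl | rfl
      exacts [⟨hQs.trans (i2.trans i1), hQ4, hQP⟩, ⟨hRs.trans (i2.trans i1), hR4, hRP⟩,
        ⟨hUs.trans i1, hU4, hUP⟩, ⟨hW, hW4, hWP⟩])).trans h3
  rw [h4] at hle
  exact absurd hle (by decide)

/-- A `5`-set with two `P₄`s is not extended by any outside vertex. -/
theorem two_p4_not_ext [Fintype V] (hc : P4Connected G) (h73 : SevenThreeGraph G)
    (hV : 7 ≤ Fintype.card V) {a b c d v : V} (hvQ : v ∉ ({a, b, c, d} : Finset V))
    (hs : (insert v ({a, b, c, d} : Finset V)).card = 5)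
    (hQ4 : ({a, b, c, d} : Finset V).card = 4) (hQP : InducesP4 G {a, b, c, d})
    (hab : G.Adj a b) (hbc : G.Adj b c) (hcd : G.Adj c d)
    (hac : ¬ G.Adj a c) (had : ¬ G.Adj a d) (hbd : ¬ G.Adj b d)
    (hvE : ¬ NoExt G {a, b, c, d} v)
    (hcov : ∀ h ∈ insert v ({a, b, c, d} : Finset V),
      ∃ Q' ⊆ insert v {a, b, c, d}, h ∈ Q' ∧ Q'.card = 4 ∧ InducesP4 G Q')
    {R : Finset V} (hRs : R ⊆ insert v {a, b, c, d}) (hR4 : R.card = 4) (hRP : InducesP4 G R)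
    (hQR : {a, b, c, d} ≠ R) {z : V} (hz : z ∉ insert v ({a, b, c, d} : Finset V))
    (hzE : ¬ NoExt G (insert v {a, b, c, d}) z) : False := by
  have hr : ∀ n m, n ≤ m → ∀ i ∈ List.range n, i < m := fun n m hn i hi =>
    (List.mem_range.1 hi).trans_le hn
  have hzE' := hzE
  simp only [NoExt] at hzE
  push Not at hzE
  obtain ⟨U, hUs, hzU, hU4, hUP⟩ := hzE
  have hno := noExt_of_three_p4 h73 hs hz (Finset.subset_insert v _) hQ4 hQP hRs hR4 hRP hQR
    hUs hzU hU4 hUP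
  obtain ⟨x, y, hx, hy, hxy, W, hW, hxW, hyW, hW4, hWP⟩ :=
    exists_crossing_pair hc h73 hV ⟨z, by simp⟩
      (exists_notMem_of_card_lt (t := insert z (insert v {a, b, c, d})) (by
        rw [Finset.card_insert_of_notMem hz]; omega))
      (by
        intro h hh
        rcases Finset.mem_insert.1 hh with rfl | hh
        · exact ⟨U, hUs, hzU, hU4, hUP⟩
        · obtain ⟨Q', h1, h2⟩ := hcov h hh
          exact ⟨Q', h1.trans (Finset.subset_insert _ _), h2⟩) hno
  have nx := hno x hx
  have ny := hno y hy
  let vs : ℕ → V := fun i => [a, b, c, d, v, z, x, y].getD i a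
  have hset4 : toSet vs (List.range 4) = {a, b, c, d} := by
    ext u; simp [mem_toSet, List.range_succ, vs, eq_comm]
  have hset5 : toSet vs (List.range 5) = insert v {a, b, c, d} := by
    rw [show List.range 5 = List.range 4 ++ [4] from rfl, toSet_append, hset4, Finset.insert_eq]
    rfl
  have hset : toSet vs (List.range 6) = insert z (insert v {a, b, c, d}) := by
    rw [show List.range 6 = List.range 5 ++ [5] from rfl, toSet_append, hset5, Finset.insert_eq]
    rfl
  rw [← hset] at nx ny hW
  simp only [Finset.mem_insert, Finset.mem_singleton, not_or] at hx hy hz hvQ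
  have r4 : Rep G vs [0, 1, 2, 4] := Rep.path hab hbc hcd hac had hbd
  obtain ⟨p, hp, r5⟩ := r4.exists_snoc (by
    intro i hi; simp only [List.length_cons, List.length_nil] at hi
    interval_cases i <;> simp [vs] <;> grind)
  obtain ⟨q, hq, r6⟩ := r5.exists_snoc (by
    intro i hi; simp at hi
    interval_cases i <;> simp [vs] <;> grind)
  simp only [List.cons_append, List.nil_append] at r5 r6
  have hhit : hits [0, 1, 2, 4, p] (List.range 4) [4] = true := by
    rw [Rep.hits_single r5 (n := 4) (by simp) (range_pairwise 4) (hr 4 4 le_rfl), hset4]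
    exact hvE
  have hhit' : hits [0, 1, 2, 4, p, q] (List.range 5) [5] = true := by
    rw [Rep.hits_single r6 (n := 5) (by simp) (range_pairwise 5) (hr 5 5 le_rfl), hset5]
    exact hzE'
  have hthree : Nat.ble (p4Count [0, 1, 2, 4, p, q] (List.range 6)) 3 = true :=
    Nat.ble_eq_true_of_le
      (p4Count_le_three h73 hV r6 (range_pairwise 6) (hr 6 6 le_rfl) (by simp))
  have hck := sixSetCheck_eq
  simp only [sixSetCheck, List.all_eq_true, Bool.or_eq_true, List.mem_range] at hck
  have hck := hck p (by simpa using hp)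
  simp only [hhit, Bool.not_true, Bool.false_eq_true, false_or] at hck
  have hck := hck q (by simpa using hq)
  simp only [hhit', hthree, Bool.not_true, Bool.false_eq_true, false_or] at hck
  obtain ⟨x', y', r8, hble⟩ := allPairs_sound (m := 6) r6 rfl
    (by intro i hi; interval_cases i <;> simp [vs] <;> grind)
    (by intro i hi; interval_cases i <;> simp [vs] <;> grind)
    hxy nx ny
    (fun vs' x' h1 h2 h3 h4 => (by decide : ∀ x < 2 ^ 6, x % 2 ^ 4 ∈ [0, 6, 15] →
      x ∈ [0, 6, 15, 16, 22, 31, 32, 38, 47, 48, 54, 63]) x' h4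
        (type_cands r4 rfl (by simp) vs' x' h1 h2 h3))
    hW hxW hyW hW4 hWP hck
  have h3 := p4Count_le_three h73 hV r8 (idx := [0, 1, 2, 3, 4, 6, 7]) (by decide) (by simp)
    (by simp)
  have h4 := Nat.le_of_ble_eq_true hble
  exact absurd (h4.trans h3) (by decide)

theorem p4Sparse_of_sevenThree [Fintype V] (hc : P4Connected G) (h73 : SevenThreeGraph G)
    (hV : 7 ≤ Fintype.card V) : P4Sparse G := by
  rintro s hs Q ⟨hQs, hQ4, hQP⟩ R ⟨hRs, hR4, hRP⟩
  by_contra hQR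
  obtain ⟨v, hvQ, rfl⟩ : ∃ v ∉ Q, insert v Q = s :=
    (Finset.exists_eq_insert_iff (s := Q) (t := s)).2 ⟨hQs, by omega⟩
  have hvR : v ∈ R := by
    by_contra hvR
    exact hQR (Finset.eq_of_subset_of_card_le ((Finset.subset_insert_iff_of_notMem hvR).1 hRs)
      (by omega)).symm
  have hvE : ¬ NoExt G Q v := fun h => h R hRs hvR hR4 hRP
  have hcov : ∀ h ∈ insert v Q, ∃ Q' ⊆ insert v Q, h ∈ Q' ∧ Q'.card = 4 ∧ InducesP4 G Q' := by
    intro h hh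
    rcases Finset.mem_insert.1 hh with rfl | hh
    exacts [⟨R, hRs, hvR, hR4, hRP⟩, ⟨Q, hQs, hh, hQ4, hQP⟩]
  obtain ⟨a, b, c, d, rfl, hab, hbc, hcd, hac, had, hbd⟩ := exists_path hQP
  by_cases hcase : ∀ x ∉ insert v ({a, b, c, d} : Finset V), NoExt G (insert v {a, b, c, d}) x
  · exact two_p4_exists_ext hc h73 hV hvQ hs hab hbc hcd hac had hbd hvE hcov hcase
  · push Not at hcase
    obtain ⟨z, hz, hzE⟩ := hcase
    exact two_p4_not_ext hc h73 hV hvQ hs hQ4 hQP hab hbc hcd hac had hbd hvE hcov hRs hR4 hRP hQR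
      hz hzE
end

/-! ### Growing headless spiders -/

/-- The families `c` and `s` are the body and the legs of a headless spider in `G`, thick iff `t`,
indexed by an arbitrary type. -/
structure Sp (G : SimpleGraph V) (t : Bool) {ι : Type*} (c s : ι → V) : Prop where
  cc : ∀ i j, i ≠ j → G.Adj (c i) (c j)
  ss : ∀ i j, ¬ G.Adj (s i) (s j)
  cs : ∀ i j, G.Adj (c i) (s j) ↔ if t then i ≠ j else i = j
  ne : ∀ i j, c i ≠ s j

/-- The pair `x, y` relates to the body vertex `c` and the leg `s` of the same index as another body
vertex and another leg would. -/
def Ext (G : SimpleGraph V) (t : Bool) (c s x y : V) : Prop :=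
  G.Adj x c ∧ (G.Adj x s ↔ t = true) ∧ (G.Adj y c ↔ t = true) ∧ ¬ G.Adj y s ∧
    (G.Adj x y ↔ t = false)

/-- The vertex set of a spider. -/
def verts [DecidableEq V] {ι : Type*} [Fintype ι] (c s : ι → V) : Finset V :=
  Finset.univ.image c ∪ Finset.univ.image s

/-- The symmetric adjacency relation of the graph encoded by `r`. -/
def sbit (r : List ℕ) (i j : ℕ) : Bool :=
  if i < j then bit r i j else if j < i then bit r j i else false

section
variable {vs : ℕ → V} {r : List ℕ} {t : Bool} {ι κ : Type*} {c s : ι → V}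

theorem Rep.adj_iff (h : Rep G vs r) {i j : ℕ} (hi : i < r.length) (hj : j < r.length) :
    G.Adj (vs i) (vs j) ↔ sbit r i j = true := by
  rcases lt_trichotomy i j with hij | rfl | hij
  · rw [sbit, if_pos hij, h.adj i j hij hj]
  · simp [sbit]
  · rw [sbit, if_neg hij.not_gt, if_pos hij, h.adj j i hij hi, G.adj_comm]

theorem Sp.comp (h : Sp G t c s) {f : κ → ι} (hf : Function.Injective f) :
    Sp G t (c ∘ f) (s ∘ f) where
  cc i j hij := h.cc _ _ (hf.ne hij)
  ss i j := h.ss _ _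
  cs i j := by simp only [Function.comp, h.cs, hf.eq_iff, ne_eq]
  ne i j := h.ne _ _

theorem Sp.injective_body (h : Sp G t c s) : Function.Injective c := by
  intro i j hij
  by_contra hne
  exact G.loopless.irrefl _ (hij ▸ h.cc i j hne)

theorem Sp.injective_legs (h : Sp G t c s) : Function.Injective s := by
  intro i j hij
  have h1 := h.cs i i
  have h2 := h.cs i j
  rw [hij, h2] at h1
  cases t <;> simpa using h1

/-- A spider with three legs can be read off an encoding, its vertices having the indices `b` and `l`. -/
theorem Sp.of_rep (h : Rep G vs r) (b l : Fin 3 → ℕ)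
    (hlt : ∀ i, b i < r.length ∧ l i < r.length)
    (hcc : ∀ i j, i ≠ j → sbit r (b i) (b j) = true) (hss : ∀ i j, sbit r (l i) (l j) = false)
    (hcs : ∀ i j, sbit r (b i) (l j) = true ↔ if t then i ≠ j else i = j)
    (hne : ∀ i j, b i ≠ l j) : Sp G t (fun i => vs (b i)) (fun i => vs (l i)) where
  cc i j hij := (h.adj_iff (hlt i).1 (hlt j).1).2 (hcc i j hij)
  ss i j := by rw [h.adj_iff (hlt i).2 (hlt j).2, hss]; simp
  cs i j := by rw [h.adj_iff (hlt i).1 (hlt j).2, hcs]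
  ne i j e := hne i j (h.eq (hlt i).1 (hlt j).2 e)

theorem Sp.rep {c s : Fin 3 → V} (h : Sp G t c s) (hc : ∀ a : Fin 3, vs a = c a)
    (hs : ∀ a : Fin 3, vs (a + 3) = s a) : Rep G vs (spiderRows t) := by
  have c0 : vs 0 = c 0 := hc 0
  have c1 : vs 1 = c 1 := hc 1
  have c2 : vs 2 = c 2 := hc 2
  have s0 : vs 3 = s 0 := hs 0
  have s1 : vs 4 = s 1 := hs 1
  have s2 : vs 5 = s 2 := hs 2
  have hl : (spiderRows t).length = 6 := by cases t <;> rfl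
  constructor
  · intro i j hij hj
    rw [hl] at hj
    interval_cases j <;> interval_cases i <;>
      simp [c0, c1, c2, s0, s1, s2, h.ne, h.injective_body.eq_iff, h.injective_legs.eq_iff]
  · intro i j hij hj
    rw [hl] at hj
    interval_cases j <;> interval_cases i <;>
      simp only [c0, c1, c2, s0, s1, s2, h.cs, h.ss] <;>
      cases t <;> simp [spiderRows, bit_eq, nth, Nat.testBit, h.cc]

/-- The six vertices of a spider with three legs, in the order used by `spiderRows`, followed by `x` and
`y`. -/
def spVs (c s : Fin 3 → V) (x y : V) (i : ℕ) : V :=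
  [c 0, c 1, c 2, s 0, s 1, s 2, x, y].getD i x

theorem Sp.rep_spVs {c s : Fin 3 → V} (h : Sp G t c s) (x y : V) :
    Rep G (spVs c s x y) (spiderRows t) :=
  h.rep (fun a => by fin_cases a <;> rfl) (fun a => by fin_cases a <;> rfl)

theorem Ext.asymm {ci si x y : V} (h : Ext G t ci si x y) : ¬ Ext G t ci si y x := by
  rintro ⟨-, h1, h2, h3, -⟩
  obtain ⟨h4, h5, -⟩ := h
  cases t <;> simp_all

variable [DecidableEq V]

theorem mem_verts [Fintype ι] {v : V} : v ∈ verts c s ↔ ∃ i, c i = v ∨ s i = v := by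
  simp [verts, exists_or]

theorem noExt_of_sparse (hsp : P4Sparse G) {Q : Finset V} {x : V} (hx : x ∉ Q) (hQ4 : Q.card = 4)
    (hQP : InducesP4 G Q) : NoExt G Q x := by
  intro W hW hxW hW4 hWP
  have := hsp (insert x Q) (by rw [Finset.card_insert_of_notMem hx, hQ4])
    ⟨Finset.subset_insert x Q, hQ4, hQP⟩ ⟨hW, hW4, hWP⟩
  exact hx (this ▸ hxW)

theorem Rep.noExt_spider (hsp : P4Sparse G) (h : Rep G vs (spiderRows t))
    (hne : ∀ i < 6, vs i ≠ vs 6) : NoExt G (toSet vs (List.range 6)) (vs 6) := by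
  have hl : (spiderRows t).length = 6 := by cases t <;> rfl
  obtain ⟨x, hx, h7⟩ := h.exists_snoc (by rwa [hl])
  rw [hl] at hx
  have hl' : (spiderRows t ++ [x]).length = 7 := by simp [hl]
  have aux : ∀ q : List ℕ, q.Pairwise (· < ·) → (∀ i ∈ q, i < 6) → q.length = 4 →
      isP4 (spiderRows t) q = true → hits (spiderRows t ++ [x]) q [6] = false := by
    intro q hp hq h4 hP
    rw [h7.not_hits_single (n := 6) (by omega) hp hq]
    refine noExt_of_sparse hsp ?_ ?_ ?_
    · rw [mem_toSet]
      rintro ⟨i, hi, he⟩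
      exact hne i (hq i hi) he
    · rw [h.card_toSet hp (by rwa [hl]), h4]
    · exact (h.isP4_iff hp (by rwa [hl]) h4).1 hP
  have hck := spiderNoExtCheck_eq t
  simp only [spiderNoExtCheck, List.all_eq_true, Bool.or_eq_true, List.mem_range] at hck
  have hck := hck x (by simpa using hx)
  rw [aux [0, 1, 3, 4] (by simp) (by simp) rfl (by cases t <;> decide),
    aux [0, 2, 3, 5] (by simp) (by simp) rfl (by cases t <;> decide),
    aux [1, 2, 4, 5] (by simp) (by simp) rfl (by cases t <;> decide)] at hck
  rw [← h7.not_hits_single (n := 6) (by omega) (range_pairwise 6) (fun i hi => List.mem_range.1 hi)]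
  simpa using hck

theorem toSet_spVs (c s : Fin 3 → V) (x y : V) :
    toSet (spVs c s x y) (List.range 6) = verts c s := by
  ext v
  simp [mem_toSet, mem_verts, List.range_succ, spVs, Fin.exists_fin_succ]
  tauto

theorem spVs_ne {c s : Fin 3 → V} {x y z : V} (hz : z ∉ verts c s) : ∀ i < 6, spVs c s x y i ≠ z := by
  intro i hi he
  rw [← toSet_spVs c s x y] at hz
  exact hz (mem_toSet.2 ⟨i, List.mem_range.2 hi, he⟩)

theorem Sp.noExt_three (hsp : P4Sparse G) {c s : Fin 3 → V} (h : Sp G t c s) {x : V}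
    (hx : x ∉ verts c s) : NoExt G (verts c s) x := by
  have := (h.rep_spVs x x).noExt_spider hsp (spVs_ne hx)
  rwa [toSet_spVs] at this

theorem Sp.ext_three (hsp : P4Sparse G) {c s : Fin 3 → V} (h : Sp G t c s) {x y : V}
    (hx : x ∉ verts c s) (hy : y ∉ verts c s) (hxy : x ≠ y) {W : Finset V}
    (hW : W ⊆ insert x (insert y (verts c s))) (hxW : x ∈ W) (hyW : y ∈ W) (hW4 : W.card = 4)
    (hWP : InducesP4 G W) :
    (∀ a, Ext G t (c a) (s a) x y) ∨ ∀ a, Ext G t (c a) (s a) y x := by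
  have hl : (spiderRows t).length = 6 := by cases t <;> rfl
  have nx := h.noExt_three hsp hx
  have ny := h.noExt_three hsp hy
  rw [← toSet_spVs c s x y] at nx ny hW
  have hck := spiderGrowCheck_eq t
  obtain ⟨x', y', hr, hxy'⟩ := allPairs_sound (m := 6) (h.rep_spVs x y) hl (spVs_ne hx) (spVs_ne hy)
    hxy nx ny (fun _ x' _ _ _ h4 => List.mem_range.2 h4) hW hxW hyW hW4 hWP hck
  have hl' : (spiderRows t ++ [x', y']).length = 8 := by simp [hl]
  rw [Bool.or_eq_true] at hxy'
  rcases hxy' with hxy' | hxy'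
  · exfalso
    rw [List.any_eq_true] at hxy'
    obtain ⟨idx, hidx, hble⟩ := hxy'
    rw [List.mem_sublistsLen] at hidx
    have h1 := p4Count_le_one hsp hr ((range_pairwise 8).sublist hidx.1)
      (fun i hi => hl' ▸ List.mem_range.1 (hidx.1.subset hi)) hidx.2
    exact absurd ((Nat.le_of_ble_eq_true hble).trans h1) (by decide)
  · have e : ∀ i < 8, ∀ j < 8, (G.Adj (spVs c s x y i) (spVs c s x y j) ↔
        sbit (spiderRows t ++ [x', y']) i j = true) := fun i hi j hj =>
      hr.adj_iff (hl' ▸ hi) (hl' ▸ hj)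
    have key : ∀ a : Fin 3,
        (G.Adj x (c a) ↔ sbit (spiderRows t ++ [x', y']) 6 a = true) ∧
        (G.Adj x (s a) ↔ sbit (spiderRows t ++ [x', y']) 6 (a + 3) = true) ∧
        (G.Adj y (c a) ↔ sbit (spiderRows t ++ [x', y']) 7 a = true) ∧
        (G.Adj y (s a) ↔ sbit (spiderRows t ++ [x', y']) 7 (a + 3) = true) ∧
        (G.Adj x y ↔ sbit (spiderRows t ++ [x', y']) 6 7 = true) := by
      intro a
      fin_cases a
      exacts [⟨e 6 (by decide) 0 (by decide), e 6 (by decide) 3 (by decide),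
          e 7 (by decide) 0 (by decide), e 7 (by decide) 3 (by decide),
          e 6 (by decide) 7 (by decide)⟩,
        ⟨e 6 (by decide) 1 (by decide), e 6 (by decide) 4 (by decide),
          e 7 (by decide) 1 (by decide), e 7 (by decide) 4 (by decide),
          e 6 (by decide) 7 (by decide)⟩,
        ⟨e 6 (by decide) 2 (by decide), e 6 (by decide) 5 (by decide),
          e 7 (by decide) 2 (by decide), e 7 (by decide) 5 (by decide),
          e 6 (by decide) 7 (by decide)⟩]
    cases t
    · simp only [Bool.false_eq_true, if_false, Bool.or_eq_true, Bool.and_eq_true, beq_iff_eq] at hxy'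
      rcases hxy' with ⟨rfl, rfl⟩ | ⟨rfl, rfl⟩
      · left
        intro a
        rw [Ext, (key a).1, (key a).2.1, (key a).2.2.1, (key a).2.2.2.1, (key a).2.2.2.2]
        revert a; decide
      · right
        intro a
        rw [Ext, G.adj_comm y x, (key a).1, (key a).2.1, (key a).2.2.1, (key a).2.2.2.1,
          (key a).2.2.2.2]
        revert a; decide
    · simp only [if_true, Bool.or_eq_true, Bool.and_eq_true, beq_iff_eq] at hxy'
      rcases hxy' with ⟨rfl, rfl⟩ | ⟨rfl, rfl⟩
      · left
        intro a
        rw [Ext, (key a).1, (key a).2.1, (key a).2.2.1, (key a).2.2.2.1, (key a).2.2.2.2]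
        revert a; decide
      · right
        intro a
        rw [Ext, G.adj_comm y x, (key a).1, (key a).2.1, (key a).2.2.1, (key a).2.2.2.1,
          (key a).2.2.2.2]
        revert a; decide

theorem exists_three [Fintype ι] [DecidableEq ι] (hι : 3 ≤ Fintype.card ι) {J : Finset ι}
    (hJ : J.card ≤ 3) :
    ∃ f : Fin 3 → ι, Function.Injective f ∧ ∀ i ∈ J, ∃ a, f a = i := by
  obtain ⟨K, hJK, hK⟩ := Finset.exists_superset_card_eq hJ hι
  refine ⟨fun a => (K.equivFinOfCardEq hK).symm a,
    Subtype.val_injective.comp (Equiv.injective _), fun i hi => ?_⟩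
  exact ⟨K.equivFinOfCardEq hK ⟨i, hJK hi⟩, by simp⟩

/-- A set `T` of spider vertices involves at most `T.card` indices, and any subspider containing these
indices contains `T`. -/
theorem exists_index [Fintype ι] [DecidableEq ι] (c s : ι → V) {T : Finset V}
    (hT : T ⊆ verts c s) : ∃ J : Finset ι, J.card ≤ T.card ∧ (T.Nonempty → J.Nonempty) ∧
      ∀ f : Fin 3 → ι, (∀ i ∈ J, ∃ a, f a = i) → T ⊆ verts (c ∘ f) (s ∘ f) := by
  have h : ∀ v : T, ∃ i, c i = v ∨ s i = v := fun v => mem_verts.1 (hT v.2)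
  choose g hg using h
  refine ⟨T.attach.image g, by simpa using Finset.card_image_le (s := T.attach) (f := g),
    fun h => by simpa using h, fun f hf v hv => mem_verts.2 ?_⟩
  obtain ⟨a, ha⟩ := hf (g ⟨v, hv⟩) (by simp)
  exact ⟨a, by simpa [ha] using hg ⟨v, hv⟩⟩

theorem verts_comp_subset [Fintype ι] [Fintype κ] (f : κ → ι) :
    verts (c ∘ f) (s ∘ f) ⊆ verts c s := by
  intro v hv
  obtain ⟨i, hi⟩ := mem_verts.1 hv
  exact mem_verts.2 ⟨f i, hi⟩

/-- A `P₄` through an outside vertex meets a spider in three vertices, hence lies over a subspider with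
three legs. -/
theorem Sp.noExt [Fintype ι] [DecidableEq ι] (hsp : P4Sparse G) (h : Sp G t c s)
    (hι : 3 ≤ Fintype.card ι) {x : V} (hx : x ∉ verts c s) : NoExt G (verts c s) x := by
  intro W hW hxW hW4 hWP
  obtain ⟨J, hJ, -, hJf⟩ := exists_index c s (T := W.erase x) (by
    rwa [← Finset.subset_insert_iff])
  rw [Finset.card_erase_of_mem hxW, hW4] at hJ
  obtain ⟨f, hf, hfJ⟩ := exists_three hι hJ
  refine (h.comp hf).noExt_three hsp (fun hx' => hx (verts_comp_subset f hx')) W ?_ hxW hW4 hWP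
  rw [Finset.subset_insert_iff]
  exact hJf f hfJ

/-- A spider that is not the whole graph has a crossing pair consisting of a new body vertex and a new
leg. -/
theorem Sp.exists_ext [Fintype ι] [DecidableEq ι] [Fintype V] (hsp : P4Sparse G)
    (hc : P4Connected G) (h73 : SevenThreeGraph G) (hV : 7 ≤ Fintype.card V) (h : Sp G t c s)
    (hι : 3 ≤ Fintype.card ι) (hH : ∃ x, x ∉ verts c s) :
    ∃ x y, x ∉ verts c s ∧ y ∉ verts c s ∧ x ≠ y ∧ ∀ i, Ext G t (c i) (s i) x y := by
  have hne : (verts c s).Nonempty := by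
    obtain ⟨i⟩ : Nonempty ι := Fintype.card_pos_iff.1 (by omega)
    exact ⟨c i, mem_verts.2 ⟨i, .inl rfl⟩⟩
  have hcov : ∀ v ∈ verts c s, ∃ Q ⊆ verts c s, v ∈ Q ∧ Q.card = 4 ∧ InducesP4 G Q := by
    intro v hv
    obtain ⟨J, hJ, -, hJf⟩ := exists_index c s (T := {v}) (by simpa using hv)
    rw [Finset.card_singleton] at hJ
    obtain ⟨f, hf, hfJ⟩ := exists_three hι (hJ.trans (by decide))
    have hv' := hJf f hfJ
    have hr := (h.comp hf).rep_spVs v v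
    have hl : (spiderRows t).length = 6 := by cases t <;> rfl
    rw [Finset.singleton_subset_iff, ← toSet_spVs _ _ v v] at hv'
    have aux : ∀ q ⊆ List.range 6, q.Pairwise (· < ·) → q.length = 4 →
        isP4 (spiderRows t) q = true → v ∈ toSet (spVs (c ∘ f) (s ∘ f) v v) q →
        ∃ Q ⊆ verts c s, v ∈ Q ∧ Q.card = 4 ∧ InducesP4 G Q := by
      intro q hq hp h4 hP hvq
      have hql : ∀ i ∈ q, i < (spiderRows t).length := fun i hi =>
        hl ▸ List.mem_range.1 (hq hi)
      refine ⟨_, ?_, hvq, by rw [hr.card_toSet hp hql, h4], (hr.isP4_iff hp hql h4).1 hP⟩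
      refine (toSet_subset hq).trans ?_
      rw [toSet_spVs]
      exact verts_comp_subset f
    obtain ⟨i, hi, hiv⟩ := mem_toSet.1 hv'
    have hi6 := List.mem_range.1 hi
    -- Two of the `P₄`s on two legs cover the six vertices of the subspider.
    by_cases h14 : i ∈ [0, 1, 3, 4]
    · exact aux [0, 1, 3, 4] (by decide) (by simp) rfl (by cases t <;> decide)
        (mem_toSet.2 ⟨i, h14, hiv⟩)
    · exact aux [1, 2, 4, 5] (by decide) (by simp) rfl (by cases t <;> decide)
        (mem_toSet.2 ⟨i, by interval_cases i <;> simp_all, hiv⟩)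
  obtain ⟨x, y, hx, hy, hxy, W, hW, hxW, hyW, hW4, hWP⟩ := exists_crossing_pair hc h73 hV hne hH hcov
    fun x hx => h.noExt hsp hι hx
  have hTcard : ((W.erase x).erase y).card = 2 := by
    rw [Finset.card_erase_of_mem (Finset.mem_erase.2 ⟨hxy.symm, hyW⟩),
      Finset.card_erase_of_mem hxW, hW4]
  obtain ⟨J, hJ, hJne, hJf⟩ := exists_index c s (T := (W.erase x).erase y) (by
    rwa [← Finset.subset_insert_iff, ← Finset.subset_insert_iff])
  rw [hTcard] at hJ
  -- Two indices account for `W`. The index `i₀` is one of them, which leaves room for an arbitrary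
  -- third index `l` in a subspider with three legs.
  obtain ⟨i₀, hi₀⟩ := hJne (Finset.card_pos.1 (by omega))
  have key : ∀ l, (Ext G t (c i₀) (s i₀) x y ∧ Ext G t (c l) (s l) x y) ∨
      (Ext G t (c i₀) (s i₀) y x ∧ Ext G t (c l) (s l) y x) := by
    intro l
    obtain ⟨f, hf, hfJ⟩ := exists_three hι (J := insert l J)
      ((Finset.card_insert_le _ _).trans (by omega))
    obtain ⟨a, ha⟩ := hfJ i₀ (Finset.mem_insert_of_mem hi₀)
    obtain ⟨b, hb⟩ := hfJ l (Finset.mem_insert_self _ _)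
    have hsub := hJf f fun i hi => hfJ i (Finset.mem_insert_of_mem hi)
    rw [← Finset.subset_insert_iff, ← Finset.subset_insert_iff] at hsub
    have := (h.comp hf).ext_three hsp (fun hx' => hx (verts_comp_subset f hx'))
      (fun hy' => hy (verts_comp_subset f hy')) hxy hsub hxW hyW hW4 hWP
    rw [← ha, ← hb]
    exact this.imp (fun h => ⟨h a, h b⟩) (fun h => ⟨h a, h b⟩)
  -- The roles of `x` and `y` cannot differ between indices, since they are determined at `i₀`.
  by_cases h0 : Ext G t (c i₀) (s i₀) x y
  · exact ⟨x, y, hx, hy, hxy, fun l => (key l).elim And.right fun h' => absurd h'.1 h0.asymm⟩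
  · exact ⟨y, x, hy, hx, hxy.symm, fun l => (key l).elim (fun h' => absurd h'.1 h0) And.right⟩

theorem Sp.cons {k : ℕ} {c s : Fin k → V} (h : Sp G t c s) {x y : V} (hx : x ∉ verts c s)
    (hy : y ∉ verts c s) (hxy : x ≠ y) (hE : ∀ i, Ext G t (c i) (s i) x y) (hk : 0 < k) :
    Sp G t (Fin.cons x c : Fin (k + 1) → V) (Fin.cons y s : Fin (k + 1) → V) where
  cc i j hij := by
    induction i using Fin.cases <;> induction j using Fin.cases
    · exact absurd rfl hij
    · exact (hE _).1
    · exact (hE _).1.symm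
    · simp only [Fin.cons_succ]
      exact h.cc _ _ (by rwa [ne_eq, Fin.succ_inj] at hij)
  ss i j := by
    induction i using Fin.cases <;> induction j using Fin.cases
    · exact G.loopless.irrefl _
    · exact (hE _).2.2.2.1
    · exact fun h' => (hE _).2.2.2.1 h'.symm
    · exact h.ss _ _
  cs i j := by
    induction i using Fin.cases <;> induction j using Fin.cases
    · simp only [Fin.cons_zero]
      rw [(hE ⟨0, hk⟩).2.2.2.2]
      cases t <;> simp
    · simp only [Fin.cons_zero, Fin.cons_succ]
      rw [(hE _).2.1]
      cases t <;> simp [(Fin.succ_ne_zero _).symm]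
    · simp only [Fin.cons_zero, Fin.cons_succ]
      rw [G.adj_comm, (hE _).2.2.1]
      cases t <;> simp [Fin.succ_ne_zero]
    · simp only [Fin.cons_succ, h.cs, ne_eq, Fin.succ_inj]
  ne i j := by
    induction i using Fin.cases <;> induction j using Fin.cases
    · exact hxy
    · exact fun e => hx (mem_verts.2 ⟨_, .inr e.symm⟩)
    · exact fun e => hy (mem_verts.2 ⟨_, .inl e⟩)
    · exact h.ne _ _

theorem exists_spider_three [Fintype V] (hsp : P4Sparse G) (hc : P4Connected G)
    (h73 : SevenThreeGraph G) (hV : 7 ≤ Fintype.card V) :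
    ∃ (t : Bool) (c s : Fin 3 → V), Sp G t c s := by
  obtain ⟨u⟩ : Nonempty V := Fintype.card_pos_iff.1 (by omega)
  obtain ⟨w, hw⟩ := exists_notMem_of_card_lt (t := {u}) (by rw [Finset.card_singleton]; omega)
  obtain ⟨Q, hQ4, hQP, -, -⟩ := hc {u} ⟨u, rfl⟩ ⟨w, by simpa using hw⟩
  have hno : ∀ x ∉ Q, NoExt G Q x := fun x hx => noExt_of_sparse hsp hx hQ4 hQP
  obtain ⟨x, y, hx, hy, hxy, W, hW, hxW, hyW, hW4, hWP⟩ := exists_crossing_pair hc h73 hV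
    (Finset.card_pos.1 (by omega)) (exists_notMem_of_card_lt (t := Q) (by omega))
    (fun h hh => ⟨Q, subset_rfl, hh, hQ4, hQP⟩) hno
  have nx := hno x hx
  have ny := hno y hy
  obtain ⟨a, b, c, d, rfl, hab, hbc, hcd, hac, had, hbd⟩ := exists_path hQP
  let vs : ℕ → V := fun i => [a, b, c, d, x, y].getD i a
  have hset : toSet vs (List.range 4) = {a, b, c, d} := by
    ext u; simp [mem_toSet, List.range_succ, vs, eq_comm]
  rw [← hset] at nx ny hW
  simp only [Finset.mem_insert, Finset.mem_singleton, not_or] at hx hy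
  have r4 : Rep G vs [0, 1, 2, 4] := Rep.path hab hbc hcd hac had hbd
  obtain ⟨x', y', r6, hres⟩ := allPairs_sound (m := 4) r4 rfl
    (by intro i hi; interval_cases i <;> simp [vs] <;> grind)
    (by intro i hi; interval_cases i <;> simp [vs] <;> grind)
    hxy nx ny
    (fun vs' x' h1 h2 h3 h4 => by
      have := type_cands r4 rfl le_rfl vs' x' h1 h2 h3
      rwa [Nat.mod_eq_of_lt h4] at this)
    hW hxW hyW hW4 hWP spiderBaseCheck_eq
  simp only [Bool.or_eq_true, Bool.and_eq_true, beq_iff_eq] at hres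
  rcases hres with ((⟨rfl, rfl⟩ | ⟨rfl, rfl⟩) | ⟨rfl, rfl⟩) | ⟨rfl, rfl⟩
  · exact ⟨false, _, _, Sp.of_rep r6 ![1, 2, 4] ![0, 3, 5] (by decide) (by decide) (by decide)
      (by decide) (by decide)⟩
  · exact ⟨false, _, _, Sp.of_rep r6 ![1, 2, 5] ![0, 3, 4] (by decide) (by decide) (by decide)
      (by decide) (by decide)⟩
  · exact ⟨true, _, _, Sp.of_rep r6 ![2, 1, 4] ![0, 3, 5] (by decide) (by decide) (by decide)
      (by decide) (by decide)⟩
  · exact ⟨true, _, _, Sp.of_rep r6 ![2, 1, 5] ![0, 3, 4] (by decide) (by decide) (by decide)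
      (by decide) (by decide)⟩

theorem Sp.iso {k : ℕ} {c s : Fin k → V} (h : Sp G t c s) (hall : ∀ x, x ∈ verts c s) :
    Nonempty (G ≃g headlessSpider k t) := by
  have hbij : Function.Bijective (Sum.elim c s) := by
    refine ⟨h.injective_body.sumElim h.injective_legs h.ne, fun v => ?_⟩
    obtain ⟨i, hi | hi⟩ := mem_verts.1 (hall v)
    exacts [⟨.inl i, hi⟩, ⟨.inr i, hi⟩]
  refine ⟨RelIso.symm ⟨Equiv.ofBijective _ hbij, ?_⟩⟩
  rintro (i | i) (j | j)
  · by_cases hij : i = j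
    · simp [hij]
    · simpa [headlessSpider, headlessSpiderRel, hij] using h.cc i j hij
  · simpa [headlessSpider, headlessSpiderRel] using h.cs i j
  · simpa [headlessSpider, headlessSpiderRel, G.adj_comm (s i)] using h.cs j i
  · simpa [headlessSpider, headlessSpiderRel] using h.ss i j

end

end SevenThree

/-- A `(7,3)`-graph that is `p₄`-connected either has fewer than `7` vertices or
is a headless spider. -/
theorem sevenThree_p4Connected_structure {V : Type*} [Fintype V] (G : SimpleGraph V)
    (h1 : SevenThreeGraph G) (h2 : P4Connected G) :
    Fintype.card V < 7 ∨
      ∃ (k : ℕ) (thick : Bool), 2 ≤ k ∧ Nonempty (G ≃g headlessSpider k thick) := by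
  classical
  by_cases hV : Fintype.card V < 7
  · exact .inl hV
  right
  rw [not_lt] at hV
  have hsp := SevenThree.p4Sparse_of_sevenThree h2 h1 hV
  obtain ⟨t, c, s, h⟩ := SevenThree.exists_spider_three hsp h2 h1 hV
  by_contra hno
  -- Spiders with arbitrarily many legs would exceed the number of vertices.
  have grow : ∀ n, ∃ c s : Fin (n + 3) → V, SevenThree.Sp G t c s := by
    intro n
    induction n with
    | zero => exact ⟨c, s, h⟩
    | succ n ih =>
      obtain ⟨c, s, h⟩ := ih
      by_cases hall : ∀ x, x ∈ SevenThree.verts c s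
      · exact absurd ⟨n + 3, t, by omega, h.iso hall⟩ hno
      · obtain ⟨x, y, hx, hy, hxy, hE⟩ := h.exists_ext hsp h2 h1 hV (by simp) (not_forall.1 hall)
        exact ⟨_, _, h.cons hx hy hxy hE (by omega)⟩
  obtain ⟨c, s, h⟩ := grow (Fintype.card V)
  have := Fintype.card_le_of_injective c h.injective_body
  rw [Fintype.card_fin] at this
  omega
end
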